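/- arXiv:2212.09087 — 3 statements merged into one kernel-verified Lean document; each statement's English description precedes it below -/
import Mathlib

section
/- Let A be a commutative Noetherian ring and let I be an ideal of A containing a nonzerodivisor of A. Then there is an isomorphism of A-modules Ext^1_A(A/I, A) ≅ (A : I)/A, where (A : I) = {x ∈ Q(A) : xI ⊆ A} and Q(A) is the total ring of fractions of A. -/
set_option maxHeartbeats 1000000
set_option synthInstance.maxHeartbeats 400000

open CategoryTheory

universe u

/-- The `i`-th Ext module `Ext_A^i(M, N)` over a commutative ring `A`. -/
noncomputable def ExtModule (A : Type u) [CommRing A] (M N : Type u)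
    [AddCommGroup M] [Module A M] [AddCommGroup N] [Module A N] (i : ℕ) : ModuleCat.{u} A :=
  ((Ext A (ModuleCat.{u} A) i).obj (Opposite.op (ModuleCat.of A M))).obj (ModuleCat.of A N)

/-- A module is torsion-free if nonzerodivisors of the ring act injectively. -/
def IsTorsionFreeModule (A : Type*) [CommRing A] (M : Type*) [AddCommGroup M]
    [Module A M] : Prop :=
  ∀ a ∈ nonZeroDivisors A, ∀ m : M, a • m = 0 → m = 0

/-- The grade of an ideal `J`: the length of a maximal regular sequence contained in `J`. -/
noncomputable def Ideal.grade {A : Type*} [CommRing A] (J : Ideal A) : ℕ∞ :=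
  sSup {n : ℕ∞ | ∃ rs : List A, (rs.length : ℕ∞) = n ∧ (∀ r ∈ rs, r ∈ J) ∧
    RingTheory.Sequence.IsWeaklyRegular A rs}

/-- A Cohen–Macaulay local ring: Noetherian local with depth equal to Krull dimension. -/
def IsCohenMacaulayLocalRing (A : Type*) [CommRing A] : Prop :=
  IsNoetherianRing A ∧ ∃ _ : IsLocalRing A,
    ((IsLocalRing.maximalIdeal A).grade : WithBot ℕ∞) = ringKrullDim A

/-- A Cohen–Macaulay ring: Noetherian, all localizations at primes are CM local rings. -/
def IsCohenMacaulayRing (A : Type*) [CommRing A] : Prop :=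
  IsNoetherianRing A ∧ ∀ (p : Ideal A) [p.IsPrime],
    IsCohenMacaulayLocalRing (Localization.AtPrime p)

/-- A Gorenstein local ring: Noetherian local of finite self-injective dimension,
expressed via vanishing of `Ext^{n+1}(A/I, A)` for all ideals `I` (Baer's criterion). -/
def IsGorensteinLocalRing (A : Type u) [CommRing A] : Prop :=
  IsLocalRing A ∧ IsNoetherianRing A ∧
    ∃ n : ℕ, ∀ I : Ideal A, Subsingleton (ExtModule A (A ⧸ I) A (n + 1))

/-- A Gorenstein ring: Noetherian, all localizations at maximal ideals are Gorenstein local. -/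
def IsGorensteinRing (A : Type u) [CommRing A] : Prop :=
  IsNoetherianRing A ∧ ∀ (m : Ideal A) [m.IsMaximal],
    IsGorensteinLocalRing (Localization.AtPrime m)

/-- Generically Gorenstein: the localization at every associated prime is Gorenstein. -/
def IsGenericallyGorenstein (A : Type u) [CommRing A] : Prop :=
  ∀ (p : Ideal A) [p.IsPrime], p ∈ associatedPrimes A A →
    IsGorensteinLocalRing (Localization.AtPrime p)

/-- The trace ideal of a module: the sum of the images of all linear maps to the ring. -/
def traceIdeal (A : Type*) [CommRing A] (M : Type*) [AddCommGroup M] [Module A M] :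
    Ideal A :=
  ⨆ f : M →ₗ[A] A, LinearMap.range f

/-- The image of an ideal inside the total ring of fractions. -/
noncomputable def Ideal.toFrac {A : Type u} [CommRing A] (I : Ideal A) :
    Submodule A (FractionRing A) :=
  Submodule.map (Algebra.linearMap A (FractionRing A)) I

/-- The conductor `(R : S)` of a birational extension `R ⊆ S ⊆ Q(R)`,
as a submodule of the total ring of fractions. -/
noncomputable def conductorFrac (R : Type u) [CommRing R]
    (S : Subalgebra R (FractionRing R)) : Submodule R (FractionRing R) :=
  (1 : Submodule R (FractionRing R)) / Subalgebra.toSubmodule S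

/-- `M ∈ Ω CM(A)`: there is an exact sequence `0 → M → P → N → 0` with `P` a finitely
generated projective `A`-module and `N` a finitely generated torsion-free
(equivalently, over a 1-dimensional CM ring, maximal Cohen–Macaulay) `A`-module. -/
def InSyzygyOfCM (A : Type u) [CommRing A] (M : Type u) [AddCommGroup M] [Module A M] :
    Prop :=
  ∃ (P N : Type u) (_ : AddCommGroup P) (_ : Module A P) (_ : AddCommGroup N)
    (_ : Module A N), Module.Projective A P ∧ Module.Finite A P ∧ Module.Finite A N ∧
      IsTorsionFreeModule A N ∧
      ∃ (f : M →ₗ[A] P) (g : P →ₗ[A] N),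
        Function.Injective f ∧ Function.Surjective g ∧ LinearMap.range f = LinearMap.ker g

section ColonMultiplication

variable {A : Type u} [CommRing A] {I : Ideal A}

theorem Ideal.exists_algebraMap_eq_mul_of_mem_colon
    (x : ↥((1 : Submodule A (FractionRing A)) / I.toFrac)) (i : I) :
    ∃ a : A, algebraMap A (FractionRing A) a = x * algebraMap A (FractionRing A) i :=
  Submodule.mem_one.1 (Submodule.mem_div_iff_forall_mul_mem.1 x.2 _
    (Submodule.mem_map_of_mem (f := Algebra.linearMap A (FractionRing A)) i.2))

theorem algebraMap_fractionRing_injective :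
    Function.Injective (algebraMap A (FractionRing A)) :=
  IsLocalization.injective (FractionRing A) (le_refl (nonZeroDivisors A))

/-- The product of an element of `(A : I)` with an element of `I`, as an element of `A`. -/
noncomputable def Ideal.colonMulFun
    (x : ↥((1 : Submodule A (FractionRing A)) / I.toFrac)) (i : I) : A :=
  (Ideal.exists_algebraMap_eq_mul_of_mem_colon x i).choose

theorem Ideal.algebraMap_colonMulFun
    (x : ↥((1 : Submodule A (FractionRing A)) / I.toFrac)) (i : I) :
    algebraMap A (FractionRing A) (Ideal.colonMulFun x i) =
      x * algebraMap A (FractionRing A) i :=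
  (Ideal.exists_algebraMap_eq_mul_of_mem_colon x i).choose_spec

variable (I) in
/-- Multiplication by elements of `(A : I)`, as linear maps from `I` to `A`. -/
noncomputable def Ideal.colonMul :
    ↥((1 : Submodule A (FractionRing A)) / I.toFrac) →ₗ[A] I →ₗ[A] A :=
  LinearMap.mk₂ A Ideal.colonMulFun
    (fun x y i => algebraMap_fractionRing_injective (by
      simp only [map_add, Ideal.algebraMap_colonMulFun, Submodule.coe_add, add_mul]))
    (fun a x i => algebraMap_fractionRing_injective (by
      simp only [smul_eq_mul, map_mul, Ideal.algebraMap_colonMulFun, Submodule.coe_smul,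
        Algebra.smul_def, mul_assoc]))
    (fun x i j => algebraMap_fractionRing_injective (by
      simp only [map_add, Ideal.algebraMap_colonMulFun, Submodule.coe_add, mul_add]))
    (fun a x i => algebraMap_fractionRing_injective (by
      simp only [smul_eq_mul, map_mul, Ideal.algebraMap_colonMulFun, Submodule.coe_smul]
      ring))

theorem Ideal.algebraMap_colonMul
    (x : ↥((1 : Submodule A (FractionRing A)) / I.toFrac)) (i : I) :
    algebraMap A (FractionRing A) (I.colonMul x i) = x * algebraMap A (FractionRing A) i :=
  Ideal.algebraMap_colonMulFun x i

/-- Given a presentation `P₂ → P₁ → P₀ → A ⧸ I → 0` with `P₀` projective, every `1`-cocycle with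
values in `A` is, up to a coboundary, multiplication by an element of `(A : I)`, which is unique
up to elements of `A`. -/
theorem Ideal.exists_colon_to_cocycles (hreg : ∃ a ∈ I, a ∈ nonZeroDivisors A)
    {P₀ P₁ P₂ : Type*} [AddCommGroup P₀] [Module A P₀] [AddCommGroup P₁] [Module A P₁]
    [AddCommGroup P₂] [Module A P₂] [Module.Projective A P₀]
    (d₂ : P₂ →ₗ[A] P₁) (d₁ : P₁ →ₗ[A] P₀) (ε : P₀ →ₗ[A] A ⧸ I)
    (h₂ : LinearMap.range d₂ = LinearMap.ker d₁) (h₁ : LinearMap.range d₁ = LinearMap.ker ε)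
    (hε : Function.Surjective ε) :
    ∃ Ψ : ↥((1 : Submodule A (FractionRing A)) / I.toFrac) →ₗ[A] P₁ →ₗ[A] A,
      (∀ x, Ψ x ∘ₗ d₂ = 0) ∧
      (∀ x, (∃ g : P₀ →ₗ[A] A, g ∘ₗ d₁ = Ψ x) ↔
        (x : FractionRing A) ∈ (1 : Submodule A (FractionRing A))) ∧
      ∀ f : P₁ →ₗ[A] A, f ∘ₗ d₂ = 0 → ∃ x, ∃ g : P₀ →ₗ[A] A, g ∘ₗ d₁ = f - Ψ x := by
  obtain ⟨s, hsI, hs⟩ := hreg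
  obtain ⟨φ, hφ⟩ := Module.projective_lifting_property (Submodule.mkQ I) ε
    (Submodule.mkQ_surjective I)
  have hφ' (p : P₀) : Submodule.Quotient.mk (φ p) = ε p := LinearMap.congr_fun hφ p
  obtain ⟨e, he⟩ := hε (Submodule.Quotient.mk 1)
  have hφe : φ e - 1 ∈ I := (Submodule.Quotient.eq I).1 ((hφ' e).trans he)
  have hd (q : P₁) : ε (d₁ q) = 0 := by
    rw [← LinearMap.mem_ker, ← h₁]; exact ⟨q, rfl⟩
  have hφd (q : P₁) : (φ ∘ₗ d₁) q ∈ I :=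
    (Submodule.Quotient.mk_eq_zero I).1 ((hφ' _).trans (hd q))
  have hsmul (i : A) (hi : i ∈ I) : i • e ∈ LinearMap.range d₁ := by
    rw [h₁, LinearMap.mem_ker, map_smul, he, ← Submodule.Quotient.mk_smul,
      Submodule.Quotient.mk_eq_zero]
    simpa using hi
  let θ : P₁ →ₗ[A] I := (φ ∘ₗ d₁).codRestrict I hφd
  let Ψ := (LinearMap.lcomp A A θ) ∘ₗ I.colonMul
  have hΨ (x) (q : P₁) : algebraMap A (FractionRing A) (Ψ x q) =
      x * algebraMap A (FractionRing A) (φ (d₁ q)) := I.algebraMap_colonMul x (θ q)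
  have hunit : IsUnit (algebraMap A (FractionRing A) s) :=
    IsLocalization.map_units (FractionRing A) ⟨s, hs⟩
  refine ⟨Ψ, fun x => ?_, fun x => ⟨?_, ?_⟩, fun f hf => ?_⟩
  · ext r
    apply algebraMap_fractionRing_injective
    have : d₁ (d₂ r) = 0 := by
      rw [← LinearMap.mem_ker, ← h₂]; exact ⟨r, rfl⟩
    simp [hΨ, this]
  · rintro ⟨g, hg⟩
    obtain ⟨q, hq⟩ := hsmul s hsI
    have h := hΨ x q
    rw [← hg, LinearMap.comp_apply, hq, g.map_smul, φ.map_smul, smul_eq_mul, smul_eq_mul, map_mul,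
      map_mul, mul_left_comm] at h
    have h := hunit.mul_left_cancel h
    have hi := I.algebraMap_colonMul x ⟨φ e - 1, hφe⟩
    refine Submodule.mem_one.2 ⟨g e - I.colonMul x ⟨φ e - 1, hφe⟩, ?_⟩
    rw [map_sub, h, hi, map_sub, map_one]
    ring
  · intro hx
    obtain ⟨a, ha⟩ := Submodule.mem_one.1 hx
    refine ⟨a • φ, LinearMap.ext fun q => algebraMap_fractionRing_injective ?_⟩
    simp [hΨ, ha]
  · have hker : LinearMap.ker d₁ ≤ LinearMap.ker f := by
      rw [← h₂, LinearMap.range_le_ker_iff]; exact hf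
    let h : LinearMap.range d₁ →ₗ[A] A :=
      (LinearMap.ker d₁).liftQ f hker ∘ₗ d₁.quotKerEquivRange.symm.toLinearMap
    have hh (q : P₁) : h (d₁.rangeRestrict q) = f q := by
      have : d₁.rangeRestrict q = d₁.quotKerEquivRange (Submodule.Quotient.mk q) := rfl
      rw [this]
      simp [h]
    obtain ⟨u, hu⟩ := hunit
    let x : FractionRing A := algebraMap A (FractionRing A) (h ⟨s • e, hsmul s hsI⟩) * ↑u⁻¹
    have hx (i : A) (hi : i ∈ I) :
        algebraMap A (FractionRing A) (h ⟨i • e, hsmul i hi⟩) =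
          x * algebraMap A (FractionRing A) i := by
      have : s * h ⟨i • e, hsmul i hi⟩ = i * h ⟨s • e, hsmul s hsI⟩ := by
        rw [← smul_eq_mul, ← smul_eq_mul, ← map_smul, ← map_smul]
        congr 1
        exact Subtype.ext (smul_comm s i e)
      have := congrArg (algebraMap A (FractionRing A)) this
      rw [map_mul, map_mul, ← hu] at this
      rw [mul_right_comm, Units.eq_mul_inv_iff_mul_eq, mul_comm, this, mul_comm]
    have hxI : x ∈ (1 : Submodule A (FractionRing A)) / I.toFrac := by
      rw [Submodule.mem_div_iff_forall_mul_mem]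
      rintro _ ⟨i, hi, rfl⟩
      exact Submodule.mem_one.2 ⟨_, hx i hi⟩
    let π : P₀ →ₗ[A] LinearMap.range d₁ :=
      (LinearMap.id - φ.smulRight e).codRestrict _ fun p => by
        rw [h₁, LinearMap.mem_ker]
        rw [LinearMap.sub_apply, LinearMap.id_apply, LinearMap.smulRight_apply, map_sub,
          map_smul, he, ← hφ', ← Submodule.Quotient.mk_smul, smul_eq_mul, mul_one, sub_self]
    refine ⟨⟨x, hxI⟩, h ∘ₗ π, LinearMap.ext fun q => algebraMap_fractionRing_injective ?_⟩
    have hπ : π (d₁ q) = d₁.rangeRestrict q - ⟨φ (d₁ q) • e, hsmul _ (hφd q)⟩ :=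
      Subtype.ext rfl
    rw [LinearMap.comp_apply, LinearMap.comp_apply, hπ, map_sub, hh, map_sub,
      LinearMap.sub_apply, map_sub, hΨ]
    exact congrArg _ (hx _ (hφd q))

end ColonMultiplication

/-- `Ext` in degree one as cocycles modulo coboundaries of a projective resolution. -/
theorem ExtModule.nonempty_one_equiv (A : Type u) [CommRing A] (M N : Type u)
    [AddCommGroup M] [Module A M] [AddCommGroup N] [Module A N]
    (P : ProjectiveResolution (ModuleCat.of A M)) {V : Type*} [AddCommGroup V] [Module A V]
    (W : Submodule A V) (Ψ : V →ₗ[A] P.complex.X 1 →ₗ[A] N)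
    (hΨ : ∀ x, Ψ x ∘ₗ (P.complex.d 2 1).hom = 0)
    (hW : ∀ x, (∃ g : P.complex.X 0 →ₗ[A] N, g ∘ₗ (P.complex.d 1 0).hom = Ψ x) ↔ x ∈ W)
    (hsurj : ∀ f : P.complex.X 1 →ₗ[A] N, f ∘ₗ (P.complex.d 2 1).hom = 0 →
      ∃ x, ∃ g : P.complex.X 0 →ₗ[A] N, g ∘ₗ (P.complex.d 1 0).hom = f - Ψ x) :
    Nonempty (ExtModule A M N 1 ≃ₗ[A] V ⧸ W) := by
  let K := P.complex.linearYonedaObj A (ModuleCat.of A N)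
  let S := K.sc' 0 1 2
  let iso : ExtModule A M N 1 ≅ S.moduleCatLeftHomologyData.H :=
    P.isoExt 1 (ModuleCat.of A N) ≪≫ K.homologyIsoSc' 0 1 2 (by simp) (by simp) ≪≫
      S.moduleCatHomologyIso
  let Φ₀ : V →ₗ[A] S.X₂ :=
    (ModuleCat.homLinearEquiv (M := P.complex.X 1) (N := ModuleCat.of A N)
      (S := A)).symm.toLinearMap ∘ₗ Ψ
  let Φ : V →ₗ[A] LinearMap.ker S.g.hom := Φ₀.codRestrict _ fun x =>
    ModuleCat.hom_ext (hΨ x)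
  let T := LinearMap.range S.moduleCatToCycles
  have hker : LinearMap.ker (T.mkQ ∘ₗ Φ) = W := by
    ext x
    rw [← hW, LinearMap.mem_ker, LinearMap.comp_apply, Submodule.mkQ_apply,
      Submodule.Quotient.mk_eq_zero]
    constructor
    · rintro ⟨g, hg⟩
      exact ⟨ModuleCat.Hom.hom g, congrArg ModuleCat.Hom.hom (congrArg Subtype.val hg)⟩
    · rintro ⟨g, hg⟩
      exact ⟨ModuleCat.ofHom g, Subtype.ext (ModuleCat.hom_ext hg)⟩
  have hs : Function.Surjective (T.mkQ ∘ₗ Φ) := by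
    intro y
    obtain ⟨⟨f, hf⟩, rfl⟩ := Submodule.mkQ_surjective T y
    obtain ⟨x, g, hg⟩ := hsurj (ModuleCat.Hom.hom f) (congrArg ModuleCat.Hom.hom hf)
    refine ⟨x, Eq.symm ((Submodule.Quotient.eq T).2 ?_)⟩
    exact ⟨ModuleCat.ofHom g, Subtype.ext (ModuleCat.hom_ext hg)⟩
  exact ⟨iso.toLinearEquiv ≪≫ₗ ((Submodule.quotEquivOfEq _ _ hker.symm) ≪≫ₗ
    (T.mkQ ∘ₗ Φ).quotKerEquivOfSurjective hs).symm⟩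

/-- `Ext¹_A(A/I, A) ≅ (A : I)/A` for an ideal `I` containing a
nonzerodivisor of the commutative Noetherian ring `A`. -/
theorem ext_one_iso_colon_mod (A : Type u) [CommRing A] [IsNoetherianRing A]
    (I : Ideal A) (hreg : ∃ a ∈ I, a ∈ nonZeroDivisors A) :
    Nonempty ((↥(ExtModule A (A ⧸ I) A 1)) ≃ₗ[A]
      ((↥((1 : Submodule A (FractionRing A)) / I.toFrac)) ⧸
        Submodule.comap ((1 : Submodule A (FractionRing A)) / I.toFrac).subtype
          (1 : Submodule A (FractionRing A)))) := by
  let P := ProjectiveResolution.of (ModuleCat.of A (A ⧸ I))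
  have : Module.Projective A (P.complex.X 0) :=
    (IsProjective.iff_projective _).2 (P.projective 0)
  obtain ⟨Ψ, h₀, hW, hsurj⟩ := Ideal.exists_colon_to_cocycles hreg
    (P.complex.d 2 1).hom (P.complex.d 1 0).hom (P.π.f 0).hom
    (P.exact_succ 0).moduleCat_range_eq_ker P.exact₀.moduleCat_range_eq_ker
    ((ModuleCat.epi_iff_surjective (P.π.f 0)).1 inferInstance)
  exact ExtModule.nonempty_one_equiv A (A ⧸ I) A P _ Ψ h₀ hW hsurj
end

section
/- Let R be a generically Gorenstein local Cohen–Macaulay Noetherian ring of dimension 1 and let R ⊆ S ⊆ Q(R) be a module finite birational extension. Then S ≅ Hom_R(S, R) as R-modules if and only if Ω CM(S) = CM(S) ∩ Ω CM(R), i.e. a finitely generated S-module lies in Ω CM(S) exactly when it is a torsion-free S-module lying in Ω CM(R). -/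
set_option maxHeartbeats 1000000
set_option synthInstance.maxHeartbeats 400000

open CategoryTheory

universe u

open scoped nonZeroDivisors

/-- Submodules of finite free modules with torsion-free cokernel are the members of `Ω CM`. -/
theorem inSyzygyOfCM_iff_exists_pi {A M : Type u} [CommRing A] [AddCommGroup M] [Module A M] :
    InSyzygyOfCM A M ↔ ∃ (n : ℕ) (f : M →ₗ[A] (Fin n → A)), Function.Injective f ∧
      ∀ a ∈ A⁰, ∀ v, a • v ∈ LinearMap.range f → v ∈ LinearMap.range f := by
  constructor
  · rintro ⟨P, N, _, _, _, _, _, _, _, hN, f, g, hf, -, hfg⟩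
    obtain ⟨n, π, hπ⟩ := Module.Finite.exists_fin' A P
    obtain ⟨i, hi⟩ := Module.projective_lifting_property π LinearMap.id hπ
    have hi' : ∀ p, π (i p) = p := fun p => LinearMap.congr_fun hi p
    refine ⟨n, i ∘ₗ f, (Function.LeftInverse.injective hi').comp hf, ?_⟩
    rintro a ha v ⟨m, hm⟩
    have hm : i (f m) = a • v := hm
    have hπv : a • π v = f m := by rw [← map_smul, ← hm, hi']
    have hmem : π v ∈ LinearMap.range f := by
      rw [hfg, LinearMap.mem_ker]
      refine hN a ha _ ?_
      rw [← map_smul, hπv, ← LinearMap.mem_ker, ← hfg]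
      exact ⟨m, rfl⟩
    obtain ⟨m', hm'⟩ := hmem
    refine ⟨m', ?_⟩
    have h : i (π v) = v := by
      funext k
      refine (mul_cancel_left_mem_nonZeroDivisors ha).mp ?_
      have := congrFun (show a • i (π v) = a • v by rw [← map_smul, hπv, hm]) k
      simpa using this
    rw [LinearMap.comp_apply, hm', h]
  · rintro ⟨n, f, hf, hsat⟩
    refine ⟨Fin n → A, (Fin n → A) ⧸ LinearMap.range f, inferInstance, inferInstance,
      inferInstance, inferInstance, inferInstance, inferInstance, inferInstance, ?_, f,
      (LinearMap.range f).mkQ, hf, Submodule.mkQ_surjective _, (Submodule.ker_mkQ _).symm⟩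
    intro a ha x hx
    obtain ⟨v, rfl⟩ := Submodule.Quotient.mk_surjective _ x
    rw [← Submodule.Quotient.mk_smul, Submodule.Quotient.mk_eq_zero] at hx
    exact (Submodule.Quotient.mk_eq_zero _).mpr (hsat a ha v hx)

theorem InSyzygyOfCM.of_equiv {A M N : Type u} [CommRing A] [AddCommGroup M] [Module A M]
    [AddCommGroup N] [Module A N] (e : M ≃ₗ[A] N) (h : InSyzygyOfCM A M) : InSyzygyOfCM A N := by
  obtain ⟨n, f, hf, hsat⟩ := inSyzygyOfCM_iff_exists_pi.mp h
  refine inSyzygyOfCM_iff_exists_pi.mpr ⟨n, f ∘ₗ e.symm.toLinearMap, hf.comp e.symm.injective, ?_⟩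
  rwa [LinearMap.range_comp_of_range_eq_top _ e.symm.range]

theorem InSyzygyOfCM.isTorsionFreeModule {A M : Type u} [CommRing A] [AddCommGroup M] [Module A M]
    (h : InSyzygyOfCM A M) : IsTorsionFreeModule A M := by
  obtain ⟨n, f, hf, -⟩ := inSyzygyOfCM_iff_exists_pi.mp h
  intro a ha m hm
  refine (map_eq_zero_iff f hf).mp (funext fun k => ?_)
  refine (mul_left_mem_nonZeroDivisors_eq_zero_iff ha).mp ?_
  have h0 := congrFun (show a • f m = 0 by rw [← map_smul, hm, map_zero]) k
  simpa using h0

theorem InSyzygyOfCM.self (A : Type u) [CommRing A] : InSyzygyOfCM A A :=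
  inSyzygyOfCM_iff_exists_pi.mpr ⟨1, LinearMap.pi fun _ => LinearMap.id,
    fun _ _ h => congrFun h 0, fun _ _ v _ => ⟨v 0, funext fun k => by
      rw [Subsingleton.elim k 0]; rfl⟩⟩

theorem InSyzygyOfCM.dual (A M : Type u) [CommRing A] [AddCommGroup M] [Module A M]
    [Module.Finite A M] : InSyzygyOfCM A (M →ₗ[A] A) := by
  obtain ⟨n, π, hπ⟩ := Module.Finite.exists_fin' A M
  refine inSyzygyOfCM_iff_exists_pi.mpr
    ⟨n, LinearMap.pi fun k => LinearMap.applyₗ (π (Pi.single k 1)), ?_, ?_⟩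
  · intro φ ψ h
    have h' : φ ∘ₗ π = ψ ∘ₗ π := by
      ext k
      exact congrFun h k
    ext m
    obtain ⟨v, rfl⟩ := hπ m
    exact LinearMap.congr_fun h' v
  · rintro a ha v ⟨φ, hφ⟩
    let ψ : (Fin n → A) →ₗ[A] A := Fintype.linearCombination A v
    have hψ : a • ψ = φ ∘ₗ π := by
      ext k
      simpa [ψ, Fintype.linearCombination_apply_single] using (congrFun hφ k).symm
    have hker : LinearMap.ker π ≤ LinearMap.ker ψ := by
      intro w hw
      rw [LinearMap.mem_ker] at hw ⊢
      refine (mul_left_mem_nonZeroDivisors_eq_zero_iff ha).mp ?_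
      simpa [hw] using LinearMap.congr_fun hψ w
    refine ⟨(LinearMap.ker π).liftQ ψ hker ∘ₗ (π.quotKerEquivOfSurjective hπ).symm.toLinearMap,
      funext fun k => ?_⟩
    have : (π.quotKerEquivOfSurjective hπ).symm (π (Pi.single k 1)) =
        Submodule.Quotient.mk (Pi.single k 1) := by
      rw [LinearEquiv.symm_apply_eq]; rfl
    simp [this, ψ, Fintype.linearCombination_apply_single]

section FractionalIdeal

variable {A Q : Type u} [CommRing A] [CommRing Q] [Algebra A Q] [IsFractionRing A Q]

theorem smul_fractionRing_cancel {a : A} (ha : a ∈ A⁰) {x y : Q} (h : a • x = a • y) : x = y := by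
  rw [Algebra.smul_def, Algebra.smul_def] at h
  exact (IsLocalization.map_units Q (⟨a, ha⟩ : A⁰)).mul_left_cancel h

theorem isTorsionFreeModule_submodule (I : Submodule A Q) : IsTorsionFreeModule A I :=
  fun a ha m hm => Subtype.ext (smul_fractionRing_cancel ha (by
    simpa using congrArg Subtype.val hm))

/-- Fractional ideals in `Ω CM` are reflexive. -/
theorem InSyzygyOfCM.one_div_one_div_le {M : Type u} [AddCommGroup M] [Module A M]
    (h : InSyzygyOfCM A M) (ι : M →ₗ[A] Q) (hι : Function.Injective ι)
    {b : A} (hb : b ∈ A⁰) (hbι : algebraMap A Q b ∈ LinearMap.range ι) :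
    (1 / (1 / LinearMap.range ι) : Submodule A Q) ≤ LinearMap.range ι := by
  obtain ⟨n, f, hf, hsat⟩ := inSyzygyOfCM_iff_exists_pi.mp h
  obtain ⟨m₀, hm₀⟩ := hbι
  intro d hd
  let q : Fin n → Q := fun k => IsLocalization.mk' Q (f m₀ k) ⟨b, hb⟩
  have hq : ∀ m k, algebraMap A Q (f m k) = q k * ι m := by
    intro m k
    obtain ⟨x, ⟨r, hr⟩, hx⟩ := IsLocalization.exists_mk'_eq A⁰ (ι m)
    have hx' : r • ι m = algebraMap A Q x := by
      rw [Algebra.smul_def, ← hx, IsLocalization.mk'_spec'_mk]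
    have hqb : b • q k = algebraMap A Q (f m₀ k) := by
      rw [Algebra.smul_def, IsLocalization.mk'_spec'_mk]
    have h1 : (r * b) • m = x • m₀ := by
      apply hι
      rw [map_smul, map_smul, hm₀, mul_comm, mul_smul, hx', Algebra.smul_def, Algebra.smul_def,
        mul_comm]
    refine smul_fractionRing_cancel (mul_mem hr hb) ?_
    have h2 := congrArg (algebraMap A Q) (congrFun (congrArg f h1) k)
    simp only [map_smul, Pi.smul_apply, smul_eq_mul, map_mul] at h2
    rw [Algebra.smul_def, map_mul, h2, ← hqb, ← hx']
    simp only [Algebra.smul_def, map_mul]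
    ring
  have hqd : ∀ k, q k * d ∈ (1 : Submodule A Q) := by
    intro k
    rw [mul_comm]
    refine Submodule.mem_div_iff_forall_mul_mem.mp hd (q k) ?_
    rw [Submodule.mem_div_iff_forall_mul_mem]
    rintro _ ⟨m, rfl⟩
    exact Submodule.mem_one.mpr ⟨_, hq m k⟩
  choose α hα using fun k => Submodule.mem_one.mp (hqd k)
  obtain ⟨x, ⟨r, hr⟩, hx⟩ := IsLocalization.exists_mk'_eq A⁰ d
  have hx' : r • d = algebraMap A Q x := by
    rw [Algebra.smul_def, ← hx, IsLocalization.mk'_spec'_mk]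
  have hιx : ι (x • m₀) = (r * b) • d := by
    rw [map_smul, hm₀, mul_comm, mul_smul, hx', Algebra.smul_def, Algebra.smul_def, mul_comm]
  have hαf : (r * b) • α = f (x • m₀) := by
    funext k
    apply IsFractionRing.injective A Q
    rw [hq, hιx, Pi.smul_apply, smul_eq_mul, map_mul, hα, Algebra.smul_def]
    ring
  obtain ⟨m, hm⟩ := hsat _ (mul_mem hr hb) α ⟨_, hαf.symm⟩
  refine ⟨m, smul_fractionRing_cancel (mul_mem hr hb) ?_⟩
  rw [← hιx, ← map_smul]
  congr 1
  apply hf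
  rw [map_smul, hm, hαf]

/-- The dual of a fractional ideal `T` containing `1` is `A : T`, through evaluation at `1`. -/
noncomputable def dualEquivOneDiv (T : Submodule A Q) (hT : (1 : Q) ∈ T) :
    (T →ₗ[A] A) ≃ₗ[A] (1 / T : Submodule A Q) :=
  have key (φ : T →ₗ[A] A) (t : T) :
      algebraMap A Q (φ t) = algebraMap A Q (φ ⟨1, hT⟩) * t := by
    obtain ⟨x, ⟨r, hr⟩, hx⟩ := IsLocalization.exists_mk'_eq A⁰ (t : Q)
    have hx' : r • (t : Q) = algebraMap A Q x := by
      rw [Algebra.smul_def, ← hx, IsLocalization.mk'_spec'_mk]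
    have h1 : r • t = x • (⟨1, hT⟩ : T) := Subtype.ext (by
      simp [hx', Algebra.smul_def])
    refine smul_fractionRing_cancel hr ?_
    have h2 := congrArg (fun z => algebraMap A Q (φ z)) h1
    simp only [map_smul, smul_eq_mul, map_mul] at h2
    rw [Algebra.smul_def, h2, ← hx']
    simp only [Algebra.smul_def]
    ring
  LinearEquiv.ofBijective
    (LinearMap.codRestrict _ (Algebra.linearMap A Q ∘ₗ LinearMap.applyₗ ⟨1, hT⟩) fun φ => by
      rw [Submodule.mem_div_iff_forall_mul_mem]
      intro t ht
      exact Submodule.mem_one.mpr ⟨_, key φ ⟨t, ht⟩⟩)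
    (by
      constructor
      · intro φ ψ h
        have h' : algebraMap A Q (φ ⟨1, hT⟩) = algebraMap A Q (ψ ⟨1, hT⟩) :=
          congrArg Subtype.val h
        ext t
        apply IsFractionRing.injective A Q
        rw [key φ t, h', ← key ψ t]
      · rintro ⟨q, hq⟩
        rw [Submodule.mem_div_iff_forall_mul_mem] at hq
        let i : A →ₗ[A] Q := Algebra.linearMap A Q
        have hi : Function.Injective i := IsFractionRing.injective A Q
        let φ : T →ₗ[A] A := (LinearEquiv.ofInjective i hi).symm.toLinearMap ∘ₗ
          LinearMap.codRestrict (LinearMap.range i) (LinearMap.mulLeft A q ∘ₗ T.subtype)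
            fun t => Submodule.mem_one.mp (hq t t.2)
        have hφ (t : T) : algebraMap A Q (φ t) = q * t :=
          congrArg Subtype.val ((LinearEquiv.ofInjective i hi).apply_symm_apply _)
        exact ⟨φ, Subtype.ext ((hφ _).trans (mul_one q))⟩)

theorem inSyzygyOfCM_one_div (T : Submodule A Q) (hT : (1 : Q) ∈ T) [Module.Finite A T] :
    InSyzygyOfCM A (1 / T : Submodule A Q) :=
  (InSyzygyOfCM.dual A T).of_equiv (dualEquivOneDiv T hT)

end FractionalIdeal

section Birational

variable {R : Type u} [CommRing R] (S : Subalgebra R (FractionRing R))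

theorem algebraMap_mem_nonZeroDivisors_of_birational {r : R} (hr : r ∈ R⁰) :
    algebraMap R S r ∈ S⁰ := by
  refine mem_nonZeroDivisors_iff_right.mpr fun s hs => Subtype.ext ?_
  refine smul_fractionRing_cancel hr ?_
  have := congrArg Subtype.val hs
  simpa [Algebra.smul_def, mul_comm] using this

/-- Nonzerodivisors of a birational extension of `R` divide nonzerodivisors of `R`. -/
theorem exists_mul_eq_algebraMap_of_birational {a : S} (ha : a ∈ S⁰) :
    ∃ r ∈ R⁰, ∃ s : S, s * a = algebraMap R S r := by
  obtain ⟨x, ⟨r, hr⟩, hx⟩ := IsLocalization.exists_mk'_eq R⁰ (a : FractionRing R)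
  have hax : algebraMap R S r * a = algebraMap R S x := Subtype.ext (by
    change algebraMap R (FractionRing R) r * a = algebraMap R (FractionRing R) x
    rw [← hx, IsLocalization.mk'_spec'_mk])
  refine ⟨x, mem_nonZeroDivisors_iff_right.mpr fun y hy => ?_, _, hax⟩
  have hxS : algebraMap R S x ∈ S⁰ :=
    hax ▸ mul_mem (algebraMap_mem_nonZeroDivisors_of_birational S hr) ha
  have h0 : algebraMap R S y = 0 :=
    mem_nonZeroDivisors_iff_right.mp hxS _ (by rw [← map_mul, hy, map_zero])
  apply IsFractionRing.injective R (FractionRing R)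
  rw [map_zero]
  exact congrArg Subtype.val h0

instance isFractionRing_of_birational : IsFractionRing S (FractionRing R) where
  map_units := by
    rintro ⟨a, ha⟩
    obtain ⟨r, hr, s, hs⟩ := exists_mul_eq_algebraMap_of_birational S ha
    refine isUnit_of_mul_isUnit_right (x := (s : FractionRing R)) ?_
    have := congrArg Subtype.val hs
    change IsUnit ((s * a : S) : FractionRing R)
    rw [this]
    exact IsLocalization.map_units (FractionRing R) (⟨r, hr⟩ : R⁰)
  surj q := by
    obtain ⟨⟨x, r⟩, hx⟩ := IsLocalization.surj R⁰ q
    exact ⟨⟨algebraMap R S x, algebraMap R S r,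
      algebraMap_mem_nonZeroDivisors_of_birational S r.2⟩, hx⟩
  exists_of_eq {x y} h := ⟨1, by rw [Subtype.ext h]⟩

/-- Over a birational extension `S` of `R`, an `R`-linear map into a torsion-free module is
`S`-linear. -/
theorem map_smul_of_birational {M N : Type*} [AddCommGroup M] [Module R M] [Module S M]
    [IsScalarTower R S M] [AddCommGroup N] [Module R N] [Module S N] [IsScalarTower R S N]
    (hN : IsTorsionFreeModule S N) (f : M →ₗ[R] N) (s : S) (m : M) : f (s • m) = s • f m := by
  obtain ⟨x, ⟨r, hr⟩, hx⟩ := IsLocalization.exists_mk'_eq R⁰ (s : FractionRing R)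
  have hrs : algebraMap R S r * s = algebraMap R S x := Subtype.ext (by
    change algebraMap R (FractionRing R) r * s = algebraMap R (FractionRing R) x
    rw [← hx, IsLocalization.mk'_spec'_mk])
  refine sub_eq_zero.mp (hN _ (algebraMap_mem_nonZeroDivisors_of_birational S hr) _ ?_)
  rw [smul_sub, ← mul_smul, hrs, algebraMap_smul, algebraMap_smul, ← map_smul,
    ← algebraMap_smul S r, ← mul_smul, hrs, algebraMap_smul, map_smul, sub_self]

/-- If `S` is a syzygy over `R`, then so are the syzygies over `S`. -/
theorem InSyzygyOfCM.restrictScalars_of_birational (hS : InSyzygyOfCM R S) {M : Type u}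
    [AddCommGroup M] [Module R M] [Module S M] [IsScalarTower R S M] (hM : InSyzygyOfCM S M) :
    InSyzygyOfCM R M := by
  obtain ⟨l, j, hj, hjsat⟩ := inSyzygyOfCM_iff_exists_pi.mp hS
  obtain ⟨n, f, hf, hsat⟩ := inSyzygyOfCM_iff_exists_pi.mp hM
  let g : M →ₗ[R] (Fin n → Fin l → R) :=
    LinearMap.pi fun k => j ∘ₗ LinearMap.proj k ∘ₗ f.restrictScalars R
  refine ⟨Fin n → Fin l → R, _ ⧸ LinearMap.range g, inferInstance, inferInstance,
    inferInstance, inferInstance, inferInstance, inferInstance, inferInstance, ?_, g,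
    (LinearMap.range g).mkQ, ?_, Submodule.mkQ_surjective _, (Submodule.ker_mkQ _).symm⟩
  · intro r hr x hx
    obtain ⟨v, rfl⟩ := Submodule.Quotient.mk_surjective _ x
    rw [← Submodule.Quotient.mk_smul, Submodule.Quotient.mk_eq_zero] at hx
    rw [Submodule.Quotient.mk_eq_zero]
    obtain ⟨m, hm⟩ := hx
    have hm' : ∀ k, j (f m k) = r • v k := congrFun hm
    choose s hs using fun k => hjsat r hr (v k) ⟨_, hm' k⟩
    obtain ⟨m', hm''⟩ := hsat _ (algebraMap_mem_nonZeroDivisors_of_birational S hr) s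
      ⟨m, funext fun k => hj (by rw [hm', Pi.smul_apply, algebraMap_smul, map_smul, hs])⟩
    refine ⟨m', funext fun k => ?_⟩
    change j (f m' k) = v k
    rw [hm'', hs]
  · exact fun m m' h => hf (funext fun k => hj (congrFun h k))

/-- If `S` is self-dual over `R`, then `S`-modules that are syzygies over `R` are syzygies
over `S`. -/
theorem InSyzygyOfCM.of_restrictScalars_of_selfdual (e : S ≃ₗ[R] (S →ₗ[R] R)) {M : Type u}
    [AddCommGroup M] [Module R M] [Module S M] [IsScalarTower R S M]
    (hM : InSyzygyOfCM R M) : InSyzygyOfCM S M := by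
  obtain ⟨n, f, hf, hsat⟩ := inSyzygyOfCM_iff_exists_pi.mp hM
  let orbit (m : M) : S →ₗ[R] M := (LinearMap.toSpanSingleton S M m).restrictScalars R
  have tf : IsTorsionFreeModule S (Fin n → S) := fun a ha v hv => funext fun k =>
    (mul_left_mem_nonZeroDivisors_eq_zero_iff ha).mp (congrFun hv k)
  let g₀ : M →ₗ[R] (Fin n → S) :=
    { toFun m k := e.symm (LinearMap.proj k ∘ₗ f ∘ₗ orbit m)
      map_add' m m' := funext fun k => by
        rw [Pi.add_apply, ← map_add]
        congr 1
        ext s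
        simp [orbit]
      map_smul' r m := funext fun k => by
        rw [RingHom.id_apply, Pi.smul_apply, ← map_smul]
        congr 1
        ext s
        simp [orbit, smul_comm s r m] }
  let g : M →ₗ[S] (Fin n → S) :=
    { toFun := g₀
      map_add' := map_add g₀
      map_smul' := map_smul_of_birational S tf g₀ }
  have hg (m : M) (k : Fin n) (s : S) : e (g m k) s = f (s • m) k := by
    change e (e.symm (LinearMap.proj k ∘ₗ f ∘ₗ orbit m)) s = _
    rw [e.apply_symm_apply]
    rfl
  refine inSyzygyOfCM_iff_exists_pi.mpr ⟨n, g, fun m m' h => hf (funext fun k => ?_), ?_⟩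
  · rw [← one_smul S m, ← one_smul S m', ← hg, ← hg, h]
  · rintro a ha v ⟨m, hm⟩
    obtain ⟨r, hr, s, hs⟩ := exists_mul_eq_algebraMap_of_birational S ha
    have hrm : g (s • m) = algebraMap R S r • v := by rw [map_smul, hm, ← mul_smul, hs]
    obtain ⟨m', hm'⟩ := hsat r hr (fun k => e (v k) 1) ⟨s • m, funext fun k => by
      have h1 : g (s • m) k = r • v k := by rw [hrm, Pi.smul_apply, algebraMap_smul]
      rw [← one_smul S (s • m), ← hg, h1, map_smul]; rfl⟩
    have hm'' : s • m = r • m' := hf (funext fun k => by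
      have h1 : g (s • m) k = r • v k := by rw [hrm, Pi.smul_apply, algebraMap_smul]
      rw [← one_smul S (s • m), ← hg, h1, map_smul, map_smul, hm']; rfl)
    refine ⟨m', sub_eq_zero.mp
      (tf _ (algebraMap_mem_nonZeroDivisors_of_birational S hr) _ ?_)⟩
    rw [smul_sub, ← hrm, hm'', algebraMap_smul, ← algebraMap_smul S r m', map_smul,
      algebraMap_smul, sub_self]

end Birational

theorem exists_nonZeroDivisor_mem_maximalIdeal {R : Type*} [CommRing R] [IsLocalRing R]
    (h : ((IsLocalRing.maximalIdeal R).grade : WithBot ℕ∞) = 1) :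
    ∃ a ∈ IsLocalRing.maximalIdeal R, a ∈ R⁰ := by
  have h1 : (0 : ℕ∞) < (IsLocalRing.maximalIdeal R).grade := by
    have : (IsLocalRing.maximalIdeal R).grade = 1 := by exact_mod_cast h
    simp [this]
  obtain ⟨n, ⟨rs, rfl, hmem, hreg⟩, hn⟩ := lt_sSup_iff.mp h1
  obtain _ | ⟨a, rs⟩ := rs
  · simp at hn
  refine ⟨a, hmem a (by simp), ?_⟩
  have ha := ((RingTheory.Sequence.isWeaklyRegular_cons_iff R a rs).mp hreg).1
  exact mem_nonZeroDivisors_iff_right.mpr fun x hx =>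
    ha (by simpa [mul_comm] using hx)

theorem isArtinianRing_quotient_span_singleton {R : Type*} [CommRing R] [IsNoetherianRing R]
    (hdim : ringKrullDim R ≤ 1) {a : R} (ha : a ∈ R⁰) : IsArtinianRing (R ⧸ Ideal.span {a}) := by
  rw [isArtinianRing_iff_krullDimLE_zero, Ring.KrullDimLE, Order.krullDimLE_iff]
  have h := (ringKrullDim_quotient_succ_le_of_nonZeroDivisor ha).trans hdim
  change ringKrullDim (R ⧸ Ideal.span {a}) ≤ 0
  generalize ringKrullDim (R ⧸ Ideal.span {a}) = d at h
  induction d with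
  | bot => simp
  | coe d =>
    induction d with
    | top => exact absurd h (by decide)
    | coe d => norm_cast at h ⊢; omega

theorem isArtinianRing_quotient_map {R S : Type*} [CommRing R] [CommRing S] [Algebra R S]
    [Module.Finite R S] (I : Ideal R) [IsArtinianRing (R ⧸ I)] :
    IsArtinianRing (S ⧸ I.map (algebraMap R S)) := by
  have : Module.Finite (R ⧸ I) (S ⧸ I.map (algebraMap R S)) :=
    Module.Finite.of_restrictScalars_finite R _ _
  exact IsArtinianRing.of_finite (R ⧸ I) _

theorem exists_ne_zero_mul_eq_zero {B : Type*} [CommRing B] [IsArtinianRing B] {J : Ideal B}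
    (hJ : J ≠ ⊤) : ∃ x ≠ 0, ∀ y ∈ J, x * y = 0 := by
  obtain ⟨n, hn, hJn⟩ := Ideal.exists_le_maximal J hJ
  have hmin : n ∈ (Module.annihilator B B).minimalPrimes := by
    refine ⟨⟨hn.isPrime, ?_⟩, fun p hp hpn => ?_⟩
    · rw [Module.annihilator_eq_bot.mpr inferInstance]; exact bot_le
    · have := hp.1
      exact (IsArtinianRing.isMaximal_of_isPrime p).eq_of_le hn.ne_top hpn ▸ le_rfl
  obtain ⟨-, x, hx⟩ := (isAssociatedPrime_iff (R := B) (M := B)).mp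
    (Module.associatedPrimes.minimalPrimes_annihilator_subset_associatedPrimes B B hmin)
  refine ⟨x, ?_, fun y hy => ?_⟩
  · rintro rfl
    exact hn.ne_top (by rw [hx]; ext; simp)
  · have := hJn hy
    rw [hx, Submodule.mem_colon_singleton] at this
    simpa [mul_comm] using this

theorem finite_maximalSpectrum_of_quotient {S : Type*} [CommRing S] (I : Ideal S)
    [IsArtinianRing (S ⧸ I)] (h : ∀ n : Ideal S, n.IsMaximal → I ≤ n) :
    Finite (MaximalSpectrum S) := by
  refine Finite.of_surjective (fun n : MaximalSpectrum (S ⧸ I) =>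
    (⟨n.asIdeal.comap (Ideal.Quotient.mk I),
      have := n.isMaximal
      Ideal.comap_isMaximal_of_surjective _ Ideal.Quotient.mk_surjective⟩ : MaximalSpectrum S)) ?_
  rintro ⟨n, hn⟩
  have hker : RingHom.ker (Ideal.Quotient.mk I) ≤ n := by
    rw [Ideal.mk_ker]; exact h n hn
  refine ⟨⟨n.map (Ideal.Quotient.mk I),
    Ideal.IsMaximal.map_of_surjective_of_ker_le Ideal.Quotient.mk_surjective hker⟩, ?_⟩
  ext1
  exact Ideal.comap_map_of_surjective' _ Ideal.Quotient.mk_surjective _ |>.trans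
    (sup_eq_left.mpr hker)

/-- If `S / a` is Artinian, every fractional ideal `J` strictly contained in `S` has an `S`-dual
strictly containing `S`. -/
theorem exists_notMem_one_forall_mul_mem {S Q : Type*} [CommRing S] [CommRing Q] [Algebra S Q]
    [IsFractionRing S Q] {a : S} (ha : a ∈ S⁰) [IsArtinianRing (S ⧸ Ideal.span {a})]
    (h : ∀ n : Ideal S, n.IsMaximal → a ∈ n) {J : Submodule S Q} (hJ : J ≤ 1) (hJ' : J ≠ 1) :
    ∃ y : Q, y ∉ (1 : Submodule S Q) ∧ ∀ x ∈ J, x * y ∈ (1 : Submodule S Q) := by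
  let I : Ideal S := J.comap (Algebra.linearMap S Q)
  have hI : I ≠ ⊤ := fun hI => hJ' (le_antisymm hJ (Submodule.one_le.mpr (by
    simpa [I] using (Ideal.eq_top_iff_one I).mp hI)))
  obtain ⟨n, hn, hIn⟩ := Ideal.exists_le_maximal I hI
  have hB : I.map (Ideal.Quotient.mk (Ideal.span {a})) ≠ ⊤ := by
    intro hB
    have h1 := Ideal.comap_map_of_surjective' (Ideal.Quotient.mk (Ideal.span {a}))
      Ideal.Quotient.mk_surjective I
    rw [hB, Ideal.comap_top, Ideal.mk_ker] at h1
    refine hn.ne_top (top_le_iff.mp (h1.trans_le (sup_le hIn ?_)))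
    rw [Ideal.span_singleton_le_iff_mem]
    exact h n hn
  obtain ⟨x, hx, hxI⟩ := exists_ne_zero_mul_eq_zero hB
  obtain ⟨x, rfl⟩ := Ideal.Quotient.mk_surjective x
  have hy : algebraMap S Q a * IsLocalization.mk' Q x (⟨a, ha⟩ : S⁰) = algebraMap S Q x :=
    IsLocalization.mk'_spec'_mk ..
  have hau : IsUnit (algebraMap S Q a) := IsLocalization.map_units Q (⟨a, ha⟩ : S⁰)
  refine ⟨IsLocalization.mk' Q x ⟨a, ha⟩, fun hmem => hx ?_, fun j hj => ?_⟩
  · obtain ⟨s, hs⟩ := Submodule.mem_one.mp hmem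
    rw [← hs, ← map_mul] at hy
    rw [Ideal.Quotient.eq_zero_iff_mem, Ideal.mem_span_singleton]
    exact ⟨s, (IsFractionRing.injective S Q hy).symm⟩
  · obtain ⟨i, rfl⟩ := Submodule.mem_one.mp (hJ hj)
    have h0 := hxI _
      (Ideal.mem_map_of_mem (Ideal.Quotient.mk (Ideal.span {a})) (show i ∈ I from hj))
    rw [← map_mul, Ideal.Quotient.eq_zero_iff_mem, Ideal.mem_span_singleton] at h0
    obtain ⟨s, hs⟩ := h0
    refine Submodule.mem_one.mpr ⟨s, hau.mul_left_cancel ?_⟩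
    rw [mul_left_comm, hy, ← map_mul, ← map_mul, ← hs, mul_comm]

theorem nonempty_linearEquiv_of_mul_eq_one {A Q : Type*} [CommRing A] [CommRing Q] [Algebra A Q]
    [IsFractionRing A Q] [Finite (MaximalSpectrum A)] {I J : Submodule A Q} (h : I * J = 1) :
    Nonempty (I ≃ₗ[A] A) := by
  obtain ⟨U, rfl⟩ : IsUnit I := .of_mul_eq_one J h
  have : FaithfulSMul A Q :=
    (faithfulSMul_iff_algebraMap_injective A Q).mpr (IsFractionRing.injective A Q)
  exact CommRing.Pic.mk_eq_one_iff.mp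
    (Subsingleton.elim (CommRing.Pic.mk A (U : Submodule A Q)) 1)

theorem inSyzygyOfCM_one {A Q : Type u} [CommRing A] [CommRing Q] [Algebra A Q]
    [IsFractionRing A Q] : InSyzygyOfCM A (1 : Submodule A Q) :=
  (InSyzygyOfCM.self A).of_equiv (LinearEquiv.ofInjective (Algebra.linearMap A Q)
    (IsFractionRing.injective A Q) ≪≫ₗ LinearEquiv.ofEq _ _ Submodule.one_eq_range.symm)

theorem finite_of_le_one {A Q : Type*} [CommRing A] [IsNoetherianRing A] [CommRing Q] [Algebra A Q]
    {I : Submodule A Q} (hI : I ≤ 1) : Module.Finite A I := by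
  have : IsNoetherian A (1 : Submodule A Q) := by
    rw [Submodule.one_eq_range]
    infer_instance
  have := isNoetherian_of_le hI
  infer_instance

/-- The conductor `R : S` as a fractional ideal of `S`. -/
def birationalConductor {R : Type u} [CommRing R] (S : Subalgebra R (FractionRing R)) :
    Submodule S (FractionRing R) where
  carrier := {q | ∀ s : S, q * s ∈ (1 : Submodule R (FractionRing R))}
  add_mem' hp hq s := by rw [add_mul]; exact add_mem (hp s) (hq s)
  zero_mem' s := by rw [zero_mul]; exact zero_mem _
  smul_mem' t q hq s := by
    have := hq (t * s)
    rwa [MulMemClass.coe_mul, mul_left_comm, ← mul_assoc] at this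

/-- The `R`-dual of `S` is the conductor. -/
noncomputable def dualEquivBirationalConductor {R : Type u} [CommRing R]
    (S : Subalgebra R (FractionRing R)) : (S →ₗ[R] R) ≃ₗ[R] birationalConductor S :=
  dualEquivOneDiv (Subalgebra.toSubmodule S) S.one_mem ≪≫ₗ
    LinearEquiv.ofEq _ ((birationalConductor S).restrictScalars R) (by
      ext q
      rw [Submodule.mem_div_iff_forall_mul_mem]
      exact ⟨fun h s => h s s.2, fun h s hs => h ⟨s, hs⟩⟩)

theorem selfdual_of_birationalConductor_mul_eq_one {R : Type u} [CommRing R]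
    (S : Subalgebra R (FractionRing R)) [Finite (MaximalSpectrum S)]
    (h : birationalConductor S * (1 / birationalConductor S) = 1) :
    Nonempty (S ≃ₗ[R] (S →ₗ[R] R)) := by
  obtain ⟨e⟩ := nonempty_linearEquiv_of_mul_eq_one h
  exact ⟨(dualEquivBirationalConductor S ≪≫ₗ e.restrictScalars R).symm⟩

/-- If `S`-syzygies are the `S`-modules that are torsion-free `R`-syzygies, then the conductor of
`S` is an invertible fractional ideal of `S`. -/
theorem birationalConductor_mul_eq_one {R : Type u} [CommRing R]
    (S : Subalgebra R (FractionRing R)) [IsNoetherianRing S] [Module.Finite R S]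
    {a : S} (ha : a ∈ S⁰) [IsArtinianRing (S ⧸ Ideal.span {a})]
    (hmax : ∀ n : Ideal S, n.IsMaximal → a ∈ n)
    (h : ∀ (M : Type u) [AddCommGroup M] [Module R M] [Module S M] [IsScalarTower R S M],
      Module.Finite S M →
        (InSyzygyOfCM S M ↔ (IsTorsionFreeModule S M ∧ InSyzygyOfCM R M))) :
    birationalConductor S * (1 / birationalConductor S) = 1 := by
  set c := birationalConductor S
  have mem_one (q : FractionRing R) : q ∈ (1 : Submodule S (FractionRing R)) ↔ q ∈ S :=
    Submodule.mem_one.trans ⟨fun ⟨s, hs⟩ => hs ▸ s.2, fun hq => ⟨⟨q, hq⟩, rfl⟩⟩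
  have one_R_le {q : FractionRing R} (hq : q ∈ (1 : Submodule R (FractionRing R))) : q ∈ S := by
    obtain ⟨r, rfl⟩ := Submodule.mem_one.mp hq
    exact S.algebraMap_mem r
  have mem_c (q : FractionRing R) : q ∈ c ↔ ∀ s : S, q * s ∈ (1 : Submodule R (FractionRing R)) :=
    Iff.rfl
  have hc1 : c ≤ 1 := fun q hq => (mem_one q).mpr (one_R_le (by simpa using hq 1))
  -- a fractional ideal of `S` in `Ω CM(R)` is `R`-reflexive
  have reflexive_R (I : Submodule S (FractionRing R)) (hI : InSyzygyOfCM R I) {b : R}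
      (hb : b ∈ R⁰) (hbI : algebraMap R (FractionRing R) b ∈ I) (d : FractionRing R)
      (hd : ∀ q, (∀ x ∈ I, q * x ∈ (1 : Submodule R (FractionRing R))) →
        d * q ∈ (1 : Submodule R (FractionRing R))) : d ∈ I := by
    let ι : I →ₗ[R] FractionRing R := I.subtype.restrictScalars R
    have hle := hI.one_div_one_div_le ι Subtype.val_injective hb ⟨⟨_, hbI⟩, rfl⟩
    obtain ⟨x, rfl⟩ := hle (Submodule.mem_div_iff_forall_mul_mem.mpr fun q hq => hd q fun x hx =>
      Submodule.mem_div_iff_forall_mul_mem.mp hq x ⟨⟨x, hx⟩, rfl⟩)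
    exact x.2
  obtain ⟨b, hb, hbc⟩ : ∃ b ∈ R⁰, algebraMap R (FractionRing R) b ∈ c := by
    obtain ⟨b, hb, hbS⟩ := FractionalIdeal.isFractional_of_fg (S := R⁰)
      (I := Subalgebra.toSubmodule S) (Module.Finite.iff_fg.mp ‹_›)
    refine ⟨b, hb, (mem_c _).mpr fun s => ?_⟩
    rw [← Algebra.smul_def]
    exact Submodule.mem_one.mpr (hbS s s.2)
  -- `S` is `R`-reflexive
  have hS (q : FractionRing R)
      (hq : ∀ x ∈ c, q * x ∈ (1 : Submodule R (FractionRing R))) : q ∈ S := by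
    have h1 := ((h (1 : Submodule S (FractionRing R)) (finite_of_le_one le_rfl)).mp
      inSyzygyOfCM_one).2
    exact (mem_one q).mp (reflexive_R 1 h1 (one_mem R⁰)
      ((mem_one _).mpr (S.algebraMap_mem _)) q fun x hx => hq x
        ((mem_c x).mpr fun s => hx s ((mem_one _).mpr s.2)))
  -- the conductor is `S`-reflexive
  have hcS : 1 / (1 / c) ≤ c := by
    have hcR : InSyzygyOfCM R c :=
      (InSyzygyOfCM.dual R S).of_equiv (dualEquivBirationalConductor S)
    have hcS := (h c (finite_of_le_one hc1)).mpr ⟨isTorsionFreeModule_submodule c, hcR⟩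
    have := hcS.one_div_one_div_le c.subtype Subtype.val_injective
      (algebraMap_mem_nonZeroDivisors_of_birational S hb) ⟨⟨_, hbc⟩, rfl⟩
    rwa [Submodule.range_subtype] at this
  by_contra hne
  obtain ⟨y, hy, hJy⟩ := exists_notMem_one_forall_mul_mem ha hmax Submodule.mul_one_div_le_one hne
  have hmulD (x u : FractionRing R) (hx : x ∈ c) (hu : u ∈ 1 / c) :
      x * u ∈ c * (1 / c) := Submodule.mul_mem_mul hx hu
  let T : Submodule S (FractionRing R) := Submodule.span S {1, y}
  have h1T : (1 : FractionRing R) ∈ T := Submodule.subset_span (by simp)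
  have hyT : y ∈ T := Submodule.subset_span (by simp)
  have : Module.Finite S T := Module.Finite.span_of_finite S (Set.toFinite _)
  have hD1 : 1 / T ≤ 1 := fun d hd => by
    simpa using Submodule.mem_div_iff_forall_mul_mem.mp hd 1 h1T
  have hJD : c * (1 / c) ≤ 1 / T := by
    intro x hx
    rw [Submodule.mem_div_iff_forall_mul_mem]
    intro t ht
    obtain ⟨s, s', rfl⟩ := Submodule.mem_span_pair.mp ht
    rw [mul_add, mul_smul_comm, mul_smul_comm, mul_one]
    exact add_mem (Submodule.smul_mem _ _ (Submodule.mul_one_div_le_one hx))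
      (Submodule.smul_mem _ _ (hJy x hx))
  have hDR := ((h (1 / T : Submodule S (FractionRing R)) (finite_of_le_one hD1)).mp
    (inSyzygyOfCM_one_div T h1T)).2
  have h1c : (1 : FractionRing R) ∈ 1 / c :=
    Submodule.mem_div_iff_forall_mul_mem.mpr fun x hx => by simpa using hc1 hx
  have h1D : (1 : FractionRing R) ∈ 1 / T := by
    refine reflexive_R _ hDR hb (hJD (by simpa using hmulD _ 1 hbc h1c)) 1 fun q hq => ?_
    have hqc : q ∈ c := hcS (Submodule.mem_div_iff_forall_mul_mem.mpr fun u hu =>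
      (mem_one _).mpr (hS _ fun x hx => by
        rw [mul_assoc, mul_comm u]
        exact hq _ (hJD (hmulD x u hx hu))))
    simpa using (mem_c q).mp hqc 1
  exact hy (by simpa using Submodule.mem_div_iff_forall_mul_mem.mp h1D y hyT)

/-- `S ≅ Hom_R(S, R)` iff `Ω CM(S) = CM(S) ∩ Ω CM(R)`, i.e. a finitely
generated `S`-module lies in `Ω CM(S)` exactly when it is torsion-free over `S` and
lies in `Ω CM(R)`. -/
theorem selfdual_iff_syzygyCM_eq (R : Type u) [CommRing R]
    (hCM : IsCohenMacaulayLocalRing R) (hdim : ringKrullDim R = 1)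
    (hGG : IsGenericallyGorenstein R)
    (S : Subalgebra R (FractionRing R)) (hfin : Module.Finite R S) :
    Nonempty (S ≃ₗ[R] (S →ₗ[R] R)) ↔
      ∀ (M : Type u) [AddCommGroup M] [Module R M] [Module S M] [IsScalarTower R S M],
        Module.Finite S M →
          (InSyzygyOfCM S M ↔ (IsTorsionFreeModule S M ∧ InSyzygyOfCM R M)) := by
  constructor
  · rintro ⟨e⟩ M _ _ _ _ _
    exact ⟨fun hM => ⟨hM.isTorsionFreeModule,
      ((InSyzygyOfCM.dual R S).of_equiv e.symm).restrictScalars_of_birational S hM⟩,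
      fun hM => hM.2.of_restrictScalars_of_selfdual S e⟩
  · intro h
    obtain ⟨hnoeth, hloc, hgrade⟩ := hCM
    obtain ⟨a, ham, ha⟩ := exists_nonZeroDivisor_mem_maximalIdeal (hgrade.trans hdim)
    have haS := algebraMap_mem_nonZeroDivisors_of_birational S ha
    have := isArtinianRing_quotient_span_singleton hdim.le ha
    have hart : IsArtinianRing (S ⧸ Ideal.span {algebraMap R S a}) := by
      have := isArtinianRing_quotient_map (S := S) (Ideal.span {a})
      rwa [Ideal.map_span, Set.image_singleton] at this
    have hmax : ∀ n : Ideal S, n.IsMaximal → algebraMap R S a ∈ n := by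
      intro n hn
      have := Ideal.isMaximal_comap_of_isIntegral_of_isMaximal (R := R) n
      rw [← Ideal.mem_comap, IsLocalRing.eq_maximalIdeal this]
      exact ham
    have : IsNoetherianRing S := IsNoetherianRing.of_finite R S
    have : Finite (MaximalSpectrum S) :=
      finite_maximalSpectrum_of_quotient (Ideal.span {algebraMap R S a}) fun n hn =>
        (Ideal.span_singleton_le_iff_mem n).mpr (hmax n hn)
    exact selfdual_of_birationalConductor_mul_eq_one S
      (birationalConductor_mul_eq_one S haS hmax h)
end

section
/- Let R be a generically Gorenstein local Cohen–Macaulay Noetherian ring of dimension 1 and let R ⊆ S ⊆ Q(R) be a module finite birational extension such that S is a Gorenstein ring. Then the following are equivalent: (i) every finitely generated torsion-free S-module is reflexive as an R-module (CM(S) ⊆ refl(R)); (ii) S ≅ Hom_R(S, R) as R-modules; (iii) S is a reflexive R-module and the conductor c_R(S) = (R : S) is a stable ideal. -/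
set_option maxHeartbeats 1000000
set_option synthInstance.maxHeartbeats 400000

open CategoryTheory

universe u

section

open CategoryTheory.Abelian

theorem subsingleton_abelianExt {A : Type u} [CommRing A] {M N : Type u}
    [AddCommGroup M] [Module A M] [AddCommGroup N] [Module A N] {n : ℕ}
    (h : Subsingleton (ExtModule A M N (n + 1))) :
    Subsingleton (Abelian.Ext (ModuleCat.of A M) (ModuleCat.of A N) (n + 1)) := by
  let P := ProjectiveResolution.of (ModuleCat.of A M)
  have hz : Limits.IsZero (ExtModule A M N (n + 1)) := ModuleCat.isZero_of_subsingleton _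
  have h2 := hz.of_iso (P.isoExt (R := A) (n + 1) (ModuleCat.of A N)).symm
  rw [← HomologicalComplex.exactAt_iff_isZero_homology,
    HomologicalComplex.exactAt_iff' _ n (n+1) (n+2) (by simp) (by simp)] at h2
  rw [ShortComplex.moduleCat_exact_iff] at h2
  refine subsingleton_of_forall_eq 0 fun x => ?_
  obtain ⟨f, hf, rfl⟩ := P.extMk_surjective x (n + 2) rfl
  rw [P.extMk_eq_zero_iff f (n+2) rfl hf n rfl]
  obtain ⟨g, hg⟩ := h2 f hf
  exact ⟨g, hg⟩

section ExtDescent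

variable {A : Type u} [CommRing A]

theorem moduleCat_shortExact {N₁ N₂ N₃ : Type u} [AddCommGroup N₁] [Module A N₁]
    [AddCommGroup N₂] [Module A N₂] [AddCommGroup N₃] [Module A N₃]
    {f : N₁ →ₗ[A] N₂} {g : N₂ →ₗ[A] N₃} (hf : Function.Injective f)
    (hg : Function.Surjective g) (hfg : Function.Exact f g) :
    (ShortComplex.mk (ModuleCat.ofHom f) (ModuleCat.ofHom g)
      (by ext x; exact hfg.apply_apply_eq_zero x)).ShortExact where
  exact := by
    rw [ShortComplex.moduleCat_exact_iff]
    intro x hx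
    exact (hfg x).1 hx
  mono_f := (ModuleCat.mono_iff_injective _).2 hf
  epi_g := (ModuleCat.epi_iff_surjective _).2 hg

theorem subsingleton_ext_of_linearEquiv {N N' : Type u} [AddCommGroup N] [Module A N]
    [AddCommGroup N'] [Module A N'] (e : N ≃ₗ[A] N') {Y : ModuleCat.{u} A} {n : ℕ}
    (h : Subsingleton (Abelian.Ext (ModuleCat.of A N') Y n)) :
    Subsingleton (Abelian.Ext (ModuleCat.of A N) Y n) := by
  refine subsingleton_of_forall_eq 0 fun x => ?_
  have : x = (Ext.mk₀ e.toModuleIso.hom).comp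
      ((Ext.mk₀ e.toModuleIso.inv).comp x (zero_add n)) (zero_add n) := by
    rw [← Ext.comp_assoc (a₁₂ := 0) _ _ _ (by simp) (by simp) (by simp), Ext.mk₀_comp_mk₀,
      Iso.hom_inv_id, Ext.mk₀_id_comp]
  rw [this, Subsingleton.elim ((Ext.mk₀ e.toModuleIso.inv).comp x (zero_add n)) 0, Ext.comp_zero]

theorem subsingleton_ext_of_exact {N₁ N₂ N₃ : Type u} [AddCommGroup N₁] [Module A N₁]
    [AddCommGroup N₂] [Module A N₂] [AddCommGroup N₃] [Module A N₃]
    {f : N₁ →ₗ[A] N₂} {g : N₂ →ₗ[A] N₃} (hf : Function.Injective f)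
    (hg : Function.Surjective g) (hfg : Function.Exact f g) {Y : ModuleCat.{u} A} {n : ℕ}
    (h₁ : Subsingleton (Abelian.Ext (ModuleCat.of A N₁) Y n))
    (h₃ : Subsingleton (Abelian.Ext (ModuleCat.of A N₃) Y n)) :
    Subsingleton (Abelian.Ext (ModuleCat.of A N₂) Y n) := by
  refine subsingleton_of_forall_eq 0 fun x => ?_
  obtain ⟨y, rfl⟩ := Ext.contravariant_sequence_exact₂ (moduleCat_shortExact hf hg hfg) Y x
    (h₁.elim _ _)
  rw [h₃.elim y 0, Ext.comp_zero]

theorem subsingleton_ext_left {N₁ N₂ N₃ : Type u} [AddCommGroup N₁] [Module A N₁]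
    [AddCommGroup N₂] [Module A N₂] [AddCommGroup N₃] [Module A N₃]
    {f : N₁ →ₗ[A] N₂} {g : N₂ →ₗ[A] N₃} (hf : Function.Injective f)
    (hg : Function.Surjective g) (hfg : Function.Exact f g) {Y : ModuleCat.{u} A} {n : ℕ}
    (h₂ : Subsingleton (Abelian.Ext (ModuleCat.of A N₂) Y n))
    (h₃ : Subsingleton (Abelian.Ext (ModuleCat.of A N₃) Y (n + 1))) :
    Subsingleton (Abelian.Ext (ModuleCat.of A N₁) Y n) := by
  refine subsingleton_of_forall_eq 0 fun x => ?_
  obtain ⟨y, rfl⟩ := Ext.contravariant_sequence_exact₁ (moduleCat_shortExact hf hg hfg) Y x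
    (add_comm 1 n) (h₃.elim _ _)
  rw [h₂.elim y 0, Ext.comp_zero]

theorem subsingleton_ext_right {N₁ N₂ N₃ : Type u} [AddCommGroup N₁] [Module A N₁]
    [AddCommGroup N₂] [Module A N₂] [AddCommGroup N₃] [Module A N₃]
    {f : N₁ →ₗ[A] N₂} {g : N₂ →ₗ[A] N₃} (hf : Function.Injective f)
    (hg : Function.Surjective g) (hfg : Function.Exact f g) {Y : ModuleCat.{u} A} {n : ℕ}
    (h₁ : Subsingleton (Abelian.Ext (ModuleCat.of A N₁) Y n))
    (h₂ : Subsingleton (Abelian.Ext (ModuleCat.of A N₂) Y (n + 1))) :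
    Subsingleton (Abelian.Ext (ModuleCat.of A N₃) Y (n + 1)) := by
  refine subsingleton_of_forall_eq 0 fun x => ?_
  obtain ⟨y, rfl⟩ := Ext.contravariant_sequence_exact₃ (moduleCat_shortExact hf hg hfg) Y x
    (h₂.elim _ _) (add_comm 1 n)
  rw [h₁.elim y 0, Ext.comp_zero]

theorem subsingleton_ext_of_projective (N : Type u) [AddCommGroup N] [Module A N]
    [Module.Projective A N] (Y : ModuleCat.{u} A) (n : ℕ) :
    Subsingleton (Abelian.Ext (ModuleCat.of A N) Y (n + 1)) :=
  have := IsProjective.iff_projective (R := A) (P := N) |>.1 inferInstance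
  subsingleton_of_forall_eq 0 fun x => Ext.eq_zero_of_projective x

variable [IsNoetherianRing A]

/-- Vanishing of `Extⁿ(-, Y)` on finitely generated modules can be tested on residue rings
modulo primes. -/
theorem subsingleton_ext_of_prime {Y : ModuleCat.{u} A} {n : ℕ}
    (h : ∀ p : Ideal A, p.IsPrime → Subsingleton (Abelian.Ext (ModuleCat.of A (A ⧸ p)) Y n))
    (N : Type u) [AddCommGroup N] [Module A N] [Module.Finite A N] :
    Subsingleton (Abelian.Ext (ModuleCat.of A N) Y n) := by
  refine IsNoetherianRing.induction_on_isQuotientEquivQuotientPrime A (M := N) inferInstance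
    (motive := fun N _ _ _ => Subsingleton (Abelian.Ext (ModuleCat.of A N) Y n)) ?_ ?_ ?_
  · intro N _ _ _ _
    refine subsingleton_of_forall_eq 0 fun x => ?_
    have : (𝟙 (ModuleCat.of A N)) = 0 :=
      (ModuleCat.isZero_of_subsingleton (ModuleCat.of A N)).eq_of_src _ _
    rw [← Ext.mk₀_id_comp x, this, Ext.mk₀_zero, Ext.zero_comp]
  · exact fun N _ _ _ p e => subsingleton_ext_of_linearEquiv e (h p.1 p.2)
  · intro N₁ _ _ _ N₂ _ _ _ N₃ _ _ _ f g hf hg hfg h₁ h₃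
    exact subsingleton_ext_of_exact hf hg hfg h₁ h₃

variable [IsLocalRing A]

/-- If `x` is a nonunit acting injectively on `N`, vanishing of `Extⁿ⁺¹(N / x N, Y)` implies
vanishing of `Extⁿ(N, Y)`, by Nakayama's lemma. -/
theorem subsingleton_ext_of_smul_injective {Y : ModuleCat.{u} A} [Module.Finite A Y] {n : ℕ}
    {x : A} (hx : x ∈ IsLocalRing.maximalIdeal A) (N : Type u) [AddCommGroup N] [Module A N]
    [Module.Finite A N] (hinj : Function.Injective fun m : N => x • m)
    (h : Subsingleton (Abelian.Ext
      (ModuleCat.of A (N ⧸ LinearMap.range (LinearMap.lsmul A N x))) Y (n + 1))) :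
    Subsingleton (Abelian.Ext (ModuleCat.of A N) Y n) := by
  have hS := moduleCat_shortExact (f := LinearMap.lsmul A N x)
    (g := (LinearMap.range (LinearMap.lsmul A N x)).mkQ) hinj (Submodule.mkQ_surjective _)
    (LinearMap.exact_map_mkQ_range _)
  have key : (⊤ : Submodule A (Abelian.Ext (ModuleCat.of A N) Y n)) = ⊥ := by
    refine Submodule.eq_bot_of_le_smul_of_le_jacobson_bot (IsLocalRing.maximalIdeal A) _
      Module.Finite.fg_top ?_ (IsLocalRing.maximalIdeal_le_jacobson _)
    intro y _
    obtain ⟨z, hz⟩ := Ext.contravariant_sequence_exact₁ hS Y y (add_comm 1 n) (h.elim _ _)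
    have : y = x • z := by
      rw [← hz]
      have : ModuleCat.ofHom (LinearMap.lsmul A N x) = x • 𝟙 (ModuleCat.of A N) := by
        ext; rfl
      simp only [this, Ext.mk₀_smul, Ext.smul_comp, Ext.mk₀_id_comp]
    rw [this]
    exact Submodule.smul_mem_smul hx trivial
  exact subsingleton_of_forall_eq 0 fun y => by
    have : y ∈ (⊤ : Submodule A (Abelian.Ext (ModuleCat.of A N) Y n)) := trivial
    rw [key] at this
    simpa using this

/-- Over a Noetherian local ring that is one-dimensional with a regular nonunit `a`, vanishing of
`Extⁿ⁺³(-, Y)` on finitely generated modules implies vanishing of `Extⁿ⁺²(-, Y)`. -/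
theorem subsingleton_ext_descend {Y : ModuleCat.{u} A} [Module.Finite A Y] {a : A}
    (ha : a ∈ nonZeroDivisors A) (ham : a ∈ IsLocalRing.maximalIdeal A)
    (hdim : ∀ p : Ideal A, p.IsPrime → a ∈ p → p = IsLocalRing.maximalIdeal A) (n : ℕ)
    (H : ∀ (N : Type u) [AddCommGroup N] [Module A N] [Module.Finite A N],
      Subsingleton (Abelian.Ext (ModuleCat.of A N) Y (n + 3)))
    (N : Type u) [AddCommGroup N] [Module A N] [Module.Finite A N] :
    Subsingleton (Abelian.Ext (ModuleCat.of A N) Y (n + 2)) := by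
  refine subsingleton_ext_of_prime (fun p hp => ?_) N
  by_cases hpm : p = IsLocalRing.maximalIdeal A
  · have hinj : Function.Injective (LinearMap.lsmul A A a) := fun b c hbc =>
      (mul_cancel_left_mem_nonZeroDivisors ha).1 hbc
    set Q := A ⧸ LinearMap.range (LinearMap.lsmul A A a)
    have hQ : Subsingleton (Abelian.Ext (ModuleCat.of A Q) Y (n + 2)) :=
      subsingleton_ext_right hinj (Submodule.mkQ_surjective _)
        (LinearMap.exact_map_mkQ_range _) (subsingleton_ext_of_projective A Y n)
        (subsingleton_ext_of_projective A Y (n + 1))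
    have : Nontrivial Q := by
      rw [Submodule.Quotient.nontrivial_iff, Ne, LinearMap.range_eq_top]
      intro hs
      obtain ⟨b, hb⟩ := hs 1
      exact (IsLocalRing.mem_maximalIdeal a).1 ham (IsUnit.of_mul_eq_one b hb)
    obtain ⟨q, hq⟩ := associatedPrimes.nonempty A Q
    have haq : a ∈ q := by
      have : a ∈ Module.annihilator A Q := by
        rw [Module.mem_annihilator]
        intro y
        obtain ⟨b, rfl⟩ := Submodule.mkQ_surjective _ y
        rw [← map_smul]
        exact (Submodule.Quotient.mk_eq_zero _).2 ⟨b, rfl⟩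
      exact hq.annihilator_le (by rwa [Submodule.annihilator_top])
    obtain ⟨f, hf⟩ := (isAssociatedPrime_iff_exists_injective_linearMap q Q).1 hq |>.2
    obtain rfl : q = p := (hdim q hq.1 haq).trans hpm.symm
    exact subsingleton_ext_left hf (Submodule.mkQ_surjective _)
        (LinearMap.exact_map_mkQ_range _) hQ (H _)
  · have hlt : ¬ IsLocalRing.maximalIdeal A ≤ p := fun hle =>
      hpm (le_antisymm (IsLocalRing.le_maximalIdeal hp.ne_top) hle)
    obtain ⟨x, hxm, hxp⟩ := Set.not_subset.1 hlt
    refine subsingleton_ext_of_smul_injective hxm _ ?_ (H _)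
    have : IsDomain (A ⧸ p) := Ideal.Quotient.isDomain p
    intro b c hbc
    have hx0 : (Ideal.Quotient.mk p x) ≠ 0 := fun h => hxp (Ideal.Quotient.eq_zero_iff_mem.1 h)
    simp only [Algebra.smul_def] at hbc
    exact mul_left_cancel₀ hx0 hbc

/-- Over a one-dimensional Gorenstein local ring, `Ext¹(N, A) = 0` for every finitely generated
module `N` on which some regular nonunit acts injectively. -/
theorem subsingleton_ext_one_of_isGorensteinLocalRing (hG : IsGorensteinLocalRing A) {a : A}
    (ha : a ∈ nonZeroDivisors A) (ham : a ∈ IsLocalRing.maximalIdeal A)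
    (hdim : ∀ p : Ideal A, p.IsPrime → a ∈ p → p = IsLocalRing.maximalIdeal A)
    (N : Type u) [AddCommGroup N] [Module A N] [Module.Finite A N]
    (hN : Function.Injective fun m : N => a • m) :
    Subsingleton (Abelian.Ext (ModuleCat.of A N) (ModuleCat.of A A) 1) := by
  obtain ⟨-, -, n, hn⟩ := hG
  have H : ∀ (N : Type u) [AddCommGroup N] [Module A N] [Module.Finite A N],
      Subsingleton (Abelian.Ext (ModuleCat.of A N) (ModuleCat.of A A) (n + 1)) :=
    subsingleton_ext_of_prime fun p _ => subsingleton_abelianExt (hn p)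
  have : Module.Finite A (ModuleCat.of A A) := inferInstanceAs (Module.Finite A A)
  clear hn
  rcases n with _ | n
  · exact H N
  · induction n with
    | zero => exact subsingleton_ext_of_smul_injective ham N hN (H _)
    | succ n ih => exact ih (subsingleton_ext_descend ha ham hdim n H)

theorem exists_extension_of_isGorensteinLocalRing (hG : IsGorensteinLocalRing A) {a : A}
    (ha : a ∈ nonZeroDivisors A) (ham : a ∈ IsLocalRing.maximalIdeal A)
    (hdim : ∀ p : Ideal A, p.IsPrime → a ∈ p → p = IsLocalRing.maximalIdeal A)
    {N₁ N₂ N₃ : Type u} [AddCommGroup N₁] [Module A N₁]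
    [AddCommGroup N₂] [Module A N₂] [AddCommGroup N₃] [Module A N₃] [Module.Finite A N₃]
    (hN : Function.Injective fun m : N₃ => a • m)
    {f : N₁ →ₗ[A] N₂} {g : N₂ →ₗ[A] N₃} (hf : Function.Injective f)
    (hg : Function.Surjective g) (hfg : Function.Exact f g) (φ : N₁ →ₗ[A] A) :
    ∃ ψ : N₂ →ₗ[A] A, ψ ∘ₗ f = φ := by
  have h := subsingleton_ext_one_of_isGorensteinLocalRing hG ha ham hdim N₃ hN
  obtain ⟨y, hy⟩ := Ext.contravariant_sequence_exact₁ (moduleCat_shortExact hf hg hfg)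
    (ModuleCat.of A A) (Ext.mk₀ (ModuleCat.ofHom φ)) (add_zero 1) (h.elim _ _)
  obtain ⟨ψ, rfl⟩ := Ext.addEquiv₀.symm.surjective y
  refine ⟨ψ.hom, ?_⟩
  rw [Ext.addEquiv₀_symm_apply, Ext.mk₀_comp_mk₀] at hy
  have := (Ext.mk₀_bijective _ _).1 hy
  exact congrArg ModuleCat.Hom.hom this

end ExtDescent

section Gorenstein

variable {B : Type u} [CommRing B]

theorem localizedModule_smul_injective {N : Type u} [AddCommGroup N] [Module B N] {b : B}
    (hN : Function.Injective fun m : N => b • m) (P : Submonoid B) :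
    Function.Injective fun m : LocalizedModule P N => algebraMap B (Localization P) b • m := by
  have h := LocalizedModule.map_injective P (LinearMap.lsmul B N b) hN
  convert h using 2 with m
  induction m using LocalizedModule.induction_on with
  | h m s => rw [LocalizedModule.map_mk, algebraMap_smul, LocalizedModule.smul'_mk]; rfl

/-- Over a one-dimensional Gorenstein ring `B`, linear forms extend along injections whose cokernel
is finitely generated and torsion-free, that is `Ext¹(N, B) = 0` for such `N`. -/
theorem exists_extension_of_isGorensteinRing (hG : IsGorensteinRing B) {b : B}
    (hb : b ∈ nonZeroDivisors B) (hmax : ∀ P : Ideal B, P.IsMaximal → b ∈ P)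
    (hdim : ∀ P : Ideal B, P.IsPrime → b ∈ P → P.IsMaximal)
    {K F N : Type u} [AddCommGroup K] [Module B K] [Module.Finite B K]
    [AddCommGroup F] [Module B F] [Module.Finite B F]
    [AddCommGroup N] [Module B N] [Module.Finite B N]
    (hN : Function.Injective fun m : N => b • m)
    {f : K →ₗ[B] F} {g : F →ₗ[B] N} (hf : Function.Injective f)
    (hg : Function.Surjective g) (hfg : Function.Exact f g) (φ : K →ₗ[B] B) :
    ∃ ψ : F →ₗ[B] B, ψ ∘ₗ f = φ := by
  have := hG.1
  have : Module.FinitePresentation B K := Module.finitePresentation_of_finite B K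
  have : Module.FinitePresentation B F := Module.finitePresentation_of_finite B F
  suffices h : Function.Surjective (LinearMap.lcomp B B f) from h φ
  refine surjective_of_isLocalized_maximal
    (fun P _ => LocalizedModule P.primeCompl F →ₗ[B] Localization P.primeCompl)
    (fun P _ => IsLocalizedModule.map P.primeCompl (LocalizedModule.mkLinearMap P.primeCompl F)
      (Algebra.linearMap B (Localization P.primeCompl)))
    (fun P _ => LocalizedModule P.primeCompl K →ₗ[B] Localization P.primeCompl)
    (fun P _ => IsLocalizedModule.map P.primeCompl (LocalizedModule.mkLinearMap P.primeCompl K)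
      (Algebra.linearMap B (Localization P.primeCompl))) _ fun P _ => ?_
  set A := Localization P.primeCompl
  set f' := LocalizedModule.map P.primeCompl f
  have hmap : IsLocalizedModule.map P.primeCompl
      (IsLocalizedModule.map P.primeCompl (LocalizedModule.mkLinearMap P.primeCompl F)
        (Algebra.linearMap B A))
      (IsLocalizedModule.map P.primeCompl (LocalizedModule.mkLinearMap P.primeCompl K)
        (Algebra.linearMap B A)) (LinearMap.lcomp B B f) =
      LinearMap.lcomp B A (f'.restrictScalars B) := by
    apply IsLocalizedModule.linearMap_ext P.primeCompl
      (IsLocalizedModule.map P.primeCompl (LocalizedModule.mkLinearMap P.primeCompl F)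
        (Algebra.linearMap B A))
      (IsLocalizedModule.map P.primeCompl (LocalizedModule.mkLinearMap P.primeCompl K)
        (Algebra.linearMap B A))
    rw [IsLocalizedModule.map_comp]
    ext1 ψ
    apply IsLocalizedModule.linearMap_ext P.primeCompl
      (LocalizedModule.mkLinearMap P.primeCompl K) (Algebra.linearMap B A)
    ext k
    simp only [f', LinearMap.comp_apply, LinearMap.lcomp_apply', LinearMap.coe_restrictScalars,
      LocalizedModule.map_mk, LocalizedModule.mkLinearMap_apply]
    rw [← LocalizedModule.mkLinearMap_apply, ← LocalizedModule.mkLinearMap_apply,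
      IsLocalizedModule.map_apply, IsLocalizedModule.map_apply]
    rfl
  rw [hmap]
  intro φ'
  have hA : IsNoetherianRing A := (hG.2 P).2.1
  have hm : ∀ x : B, algebraMap B A x ∈ IsLocalRing.maximalIdeal A ↔ x ∈ P := fun x =>
    IsLocalization.AtPrime.to_map_mem_maximal_iff A P x
  have hdim' : ∀ q : Ideal A, q.IsPrime → algebraMap B A b ∈ q →
      q = IsLocalRing.maximalIdeal A := by
    intro q hq hbq
    have h1 : (q.comap (algebraMap B A)).IsMaximal := hdim _ (hq.comap _) hbq
    have h2 : q.comap (algebraMap B A) ≤ P := fun x hx =>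
      (hm x).1 (IsLocalRing.le_maximalIdeal hq.ne_top hx)
    have h3 := h1.eq_of_le (Ideal.IsMaximal.ne_top ‹_›) h2
    rw [← IsLocalization.map_under P.primeCompl A q]
    exact (congrArg (Ideal.map (algebraMap B A)) h3).trans Localization.AtPrime.map_eq_maximalIdeal
  obtain ⟨ψ, hψ⟩ := exists_extension_of_isGorensteinLocalRing (hG.2 P)
    (a := algebraMap B A b) (IsLocalization.map_nonZeroDivisors_le P.primeCompl A ⟨b, hb, rfl⟩)
    ((hm b).2 (hmax P ‹_›)) hdim' (localizedModule_smul_injective hN P.primeCompl)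
    (LocalizedModule.map_injective P.primeCompl f hf)
    (LocalizedModule.map_surjective P.primeCompl g hg)
    (LocalizedModule.map_exact P.primeCompl f g hfg)
    (φ'.extendScalarsOfIsLocalization P.primeCompl A)
  refine ⟨ψ.restrictScalars B, ?_⟩
  ext k
  exact LinearMap.congr_fun hψ k

theorem dual_smul_injective {b : B} (hb : b ∈ nonZeroDivisors B) (M : Type*) [AddCommGroup M]
    [Module B M] : Function.Injective fun φ : Module.Dual B M => b • φ := by
  intro φ ψ h
  ext m
  exact (mul_cancel_left_mem_nonZeroDivisors hb).1 (LinearMap.congr_fun h m)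

/-- Finitely generated torsion-free modules over a one-dimensional Gorenstein ring are
reflexive. -/
theorem isReflexive_of_isGorensteinRing (hG : IsGorensteinRing B) {b : B}
    (hb : b ∈ nonZeroDivisors B) (hmax : ∀ P : Ideal B, P.IsMaximal → b ∈ P)
    (hdim : ∀ P : Ideal B, P.IsPrime → b ∈ P → P.IsMaximal)
    (M : Type u) [AddCommGroup M] [Module B M] [Module.Finite B M]
    (hM : Function.Injective fun m : M => b • m) : Module.IsReflexive B M := by
  have := hG.1
  have hsurj : ∀ (M : Type u) [AddCommGroup M] [Module B M] [Module.Finite B M],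
      (Function.Injective fun m : M => b • m) →
        Function.Surjective (Module.Dual.eval B M) := by
    intro M _ _ _ hM Φ
    obtain ⟨n, g, hg⟩ := Module.Finite.exists_fin' B M
    have hext := exists_extension_of_isGorensteinRing hG hb hmax hdim hM
      (Submodule.subtype_injective (LinearMap.ker g)) hg g.exact_subtype_ker_map
    have hexact : Function.Exact g.dualMap (LinearMap.ker g).subtype.dualMap := by
      intro ψ
      constructor
      · intro h
        refine ⟨(LinearMap.ker g).liftQ ψ (fun x hx => LinearMap.congr_fun h ⟨x, hx⟩) ∘ₗ
          (g.quotKerEquivOfSurjective hg).symm, ?_⟩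
        refine LinearMap.ext fun x => ?_
        simp only [LinearMap.dualMap_apply, LinearMap.comp_apply, LinearEquiv.coe_coe,
          LinearMap.quotKerEquivOfSurjective_symm_apply]
        exact Submodule.liftQ_apply _ _ x
      · rintro ⟨μ, rfl⟩
        ext ⟨x, hx⟩
        change μ (g x) = 0
        rw [LinearMap.mem_ker.1 hx, map_zero]
    obtain ⟨Ψ, hΨ⟩ := exists_extension_of_isGorensteinRing hG hb hmax hdim
      (dual_smul_injective hb (LinearMap.ker g))
      (LinearMap.dualMap_injective_of_surjective hg)
      (fun φ => hext φ) hexact Φ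
    obtain ⟨x, rfl⟩ := (Module.bijective_dual_eval B (Fin n → B)).2 Ψ
    exact ⟨g x, by rw [← hΨ]; rfl⟩
  refine ⟨⟨?_, hsurj M hM⟩⟩
  rw [injective_iff_map_eq_zero]
  intro m hm
  obtain ⟨n, g, hg⟩ := Module.Finite.exists_fin' B M
  obtain ⟨x, rfl⟩ := hg m
  have hext := exists_extension_of_isGorensteinRing hG hb hmax hdim hM
    (Submodule.subtype_injective (LinearMap.ker g)) hg g.exact_subtype_ker_map
  set p := (LinearMap.ker g).subtype.dualMap
  have hp : Function.Surjective p := hext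
  have hker : LinearMap.ker p ≤ LinearMap.ker (Module.Dual.eval B (Fin n → B) x) := by
    intro ψ hψ
    have hle : LinearMap.ker g ≤ LinearMap.ker ψ := fun y hy =>
      LinearMap.congr_fun (LinearMap.mem_ker.1 hψ) ⟨y, hy⟩
    have := LinearMap.congr_fun hm
      ((LinearMap.ker g).liftQ ψ hle ∘ₗ (g.quotKerEquivOfSurjective hg).symm)
    simpa using this
  obtain ⟨k, hk⟩ := hsurj (LinearMap.ker g)
    (fun y z h => Subtype.ext <| by
      ext i
      exact (mul_cancel_left_mem_nonZeroDivisors hb).1 (congrFun (congrArg Subtype.val h) i))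
    ((LinearMap.ker p).liftQ _ hker ∘ₗ (p.quotKerEquivOfSurjective hp).symm)
  have hxk : x = k := by
    apply (Module.bijective_dual_eval B (Fin n → B)).1
    ext1 ψ
    have := LinearMap.congr_fun hk (p ψ)
    have h2 : (p.quotKerEquivOfSurjective hp).symm (p ψ) = (LinearMap.ker p).mkQ ψ := by
      rw [LinearEquiv.symm_apply_eq]; simp
    simp only [LinearMap.comp_apply, LinearEquiv.coe_coe, h2, Submodule.mkQ_apply,
      Submodule.liftQ_apply] at this
    exact this.symm
  rw [hxk]
  exact k.2

end Gorenstein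

end

section Fractions

variable {A Q : Type*} [CommRing A] [CommRing Q] [Algebra A Q]

theorem exists_linearMap_of_mem_range (hinj : Function.Injective (algebraMap A Q))
    {M : Type*} [AddCommGroup M] [Module A M] (g : M →ₗ[A] Q)
    (hg : ∀ m, g m ∈ Set.range (algebraMap A Q)) :
    ∃ f : M →ₗ[A] A, ∀ m, algebraMap A Q (f m) = g m := by
  refine ⟨(LinearEquiv.ofInjective (Algebra.linearMap A Q) hinj).symm ∘ₗ
    g.codRestrict (LinearMap.range (Algebra.linearMap A Q)) hg, fun m => ?_⟩
  exact congrArg Subtype.val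
    ((LinearEquiv.ofInjective (Algebra.linearMap A Q) hinj).apply_symm_apply ⟨g m, hg m⟩)

/-- A linear map from a regular submodule of the ring of fractions is a multiplication. -/
theorem apply_eq_mul_of_isUnit
    (hden : ∀ x : Q, ∃ a : A, IsUnit (algebraMap A Q a) ∧ ∃ c : A, a • x = algebraMap A Q c)
    {I : Submodule A Q} {u : Qˣ} (hu : (u : Q) ∈ I) (f : I →ₗ[A] Q) (x : I) :
    f x = (↑u⁻¹ * f ⟨u, hu⟩) * x := by
  obtain ⟨a, ha, c, hc⟩ := hden x
  obtain ⟨b, hb, d, hd⟩ := hden u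
  have h1 : (d * a) • x = (c * b) • (⟨u, hu⟩ : I) := by
    ext
    simp only [mul_smul, Submodule.coe_smul, hc, hd, Algebra.smul_def]
    ring
  have h2 := congrArg f h1
  simp only [map_smul, Algebra.smul_def, map_mul, ← hc, ← hd] at h2
  have h3 : algebraMap A Q a * (algebraMap A Q b * (u * f x)) =
      algebraMap A Q a * (algebraMap A Q b * (u * ((↑u⁻¹ * f ⟨u, hu⟩) * x))) := by
    linear_combination h2 + algebraMap A Q a * algebraMap A Q b * f ⟨u, hu⟩ * x * (-u.mul_inv)
  exact u.isUnit.mul_left_cancel (hb.mul_left_cancel (ha.mul_left_cancel h3))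

/-- A reflexive regular fractional submodule contains its double dual. -/
theorem mem_of_isReflexive (hinj : Function.Injective (algebraMap A Q))
    (hden : ∀ x : Q, ∃ a : A, IsUnit (algebraMap A Q a) ∧ ∃ c : A, a • x = algebraMap A Q c)
    {I : Submodule A Q} {u : Qˣ} (hu : (u : Q) ∈ I) {r : A} (hr : IsUnit (algebraMap A Q r))
    (hrI : ∀ x ∈ I, algebraMap A Q r * x ∈ Set.range (algebraMap A Q))
    (hI : Module.IsReflexive A I) {y : Q}
    (hy : ∀ z : Q, (∀ x ∈ I, z * x ∈ Set.range (algebraMap A Q)) →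
      z * y ∈ Set.range (algebraMap A Q)) : y ∈ I := by
  have key (f : Module.Dual A I) (x : I) :
      algebraMap A Q (f x) = (↑u⁻¹ * algebraMap A Q (f ⟨u, hu⟩)) * x :=
    apply_eq_mul_of_isUnit hden hu (Algebra.linearMap A Q ∘ₗ f) x
  obtain ⟨Φ, hΦ⟩ := exists_linearMap_of_mem_range hinj
    (LinearMap.mulRight A y ∘ₗ LinearMap.mulLeft A (↑u⁻¹ : Q) ∘ₗ Algebra.linearMap A Q ∘ₗ
      Module.Dual.eval A I ⟨u, hu⟩) (fun f => hy _ fun x hx => ⟨f ⟨x, hx⟩, key f ⟨x, hx⟩⟩)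
  obtain ⟨x, rfl⟩ := (Module.bijective_dual_eval A I).2 Φ
  obtain ⟨f, hf⟩ := exists_linearMap_of_mem_range hinj
    (LinearMap.mulLeft A (algebraMap A Q r) ∘ₗ I.subtype) (fun x => hrI x x.2)
  have h1 : algebraMap A Q (f x) = (↑u⁻¹ * algebraMap A Q (f ⟨u, hu⟩)) * y := hΦ f
  have h2 : algebraMap A Q (f ⟨u, hu⟩) = algebraMap A Q r * u := hf _
  have h3 : algebraMap A Q (f x) = algebraMap A Q r * x := hf _
  rw [h3, h2] at h1
  have h4 : algebraMap A Q r * x = algebraMap A Q r * y := by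
    linear_combination h1 + algebraMap A Q r * y * u.mul_inv
  rw [← hr.mul_left_cancel h4]
  exact x.2

end Fractions

section Birational

variable {R : Type u} [CommRing R] {S : Subalgebra R (FractionRing R)}

theorem exists_smul_eq_algebraMap (x : FractionRing R) :
    ∃ a : R, IsUnit (algebraMap R (FractionRing R) a) ∧
      ∃ c : R, a • x = algebraMap R (FractionRing R) c := by
  obtain ⟨⟨c, a⟩, h⟩ := IsLocalization.surj (nonZeroDivisors R) x
  exact ⟨a, IsLocalization.map_units _ a, c, by rw [Algebra.smul_def, mul_comm]; exact h⟩

theorem exists_subalgebra_smul_eq_algebraMap (x : FractionRing R) :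
    ∃ a : S, IsUnit (algebraMap S (FractionRing R) a) ∧
      ∃ c : S, a • x = algebraMap S (FractionRing R) c := by
  obtain ⟨a, ha, c, hc⟩ := exists_smul_eq_algebraMap x
  exact ⟨algebraMap R S a, ha, algebraMap R S c, by rw [algebraMap_smul, hc]; rfl⟩

theorem smul_fractionRing_left_cancel {a : R} (ha : IsUnit (algebraMap R (FractionRing R) a))
    {r t : R} (h : a * r = a * t) : r = t := by
  apply IsFractionRing.injective R (FractionRing R)
  apply ha.mul_left_cancel
  rw [← map_mul, ← map_mul, h]

/-- A self-duality of `S` is given by the trace form of the image of `1`. -/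
theorem selfDual_apply (e : S →ₗ[R] Module.Dual R S) (s x : S) : e s x = e 1 (s * x) := by
  obtain ⟨a, ha, c, hc⟩ := exists_smul_eq_algebraMap (s : FractionRing R)
  have h : a • s = c • (1 : S) := by
    ext
    simpa [Algebra.smul_def] using hc
  apply smul_fractionRing_left_cancel ha
  have h1 : a • e s x = c • e 1 x := by
    rw [← LinearMap.smul_apply, ← map_smul, h, map_smul, LinearMap.smul_apply]
  have h2 : a • e 1 (s * x) = c • e 1 x := by
    rw [← map_smul, ← smul_mul_assoc, h, smul_mul_assoc, one_mul, map_smul]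
  exact h1.trans h2.symm

section Trace

variable {M : Type*} [AddCommGroup M] [Module R M] [Module S M] [IsScalarTower R S M]

theorem exists_linearMap_trace (e : S ≃ₗ[R] Module.Dual R S) (f : M →ₗ[R] R) :
    ∃ g : M →ₗ[S] S, ∀ m, f m = e 1 (g m) := by
  let φ (m : M) : Module.Dual R S := f ∘ₗ (LinearMap.toSpanSingleton S M m).restrictScalars R
  have hφ (m : M) (s : S) : φ m s = f (s • m) := rfl
  refine ⟨{ toFun m := e.symm (φ m), map_add' m n := ?_, map_smul' s m := ?_ }, fun m => ?_⟩
  · rw [← map_add]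
    congr 1
    ext s
    simp [hφ]
  · rw [LinearEquiv.symm_apply_eq]
    ext t
    rw [RingHom.id_apply, smul_eq_mul, ← LinearEquiv.coe_coe, selfDual_apply e.toLinearMap,
      mul_assoc, mul_left_comm, ← selfDual_apply e.toLinearMap, LinearEquiv.coe_coe,
      LinearEquiv.apply_symm_apply, hφ, hφ, smul_smul, mul_comm]
  · have := selfDual_apply e.toLinearMap (e.symm (φ m)) 1
    simpa [hφ] using this

theorem isReflexive_of_selfDual (e : S ≃ₗ[R] Module.Dual R S) (hM : Module.IsReflexive S M) :
    Module.IsReflexive R M := by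
  refine ⟨⟨?_, fun Φ => ?_⟩⟩
  · rw [injective_iff_map_eq_zero]
    intro m hm
    apply (Module.bijective_dual_eval S M).1
    rw [map_zero]
    ext1 g
    apply e.injective
    rw [LinearMap.zero_apply, map_zero]
    ext s
    rw [← LinearEquiv.coe_coe, selfDual_apply e.toLinearMap, mul_comm]
    have := LinearMap.congr_fun hm ((e 1) ∘ₗ (s • g).restrictScalars R)
    exact this
  · let T : Module.Dual S M →ₗ[R] Module.Dual R M :=
      { toFun g := (e 1) ∘ₗ g.restrictScalars R
        map_add' g g' := by ext; simp
        map_smul' r g := by ext; simp }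
    obtain ⟨G, hG⟩ := exists_linearMap_trace (M := Module.Dual S M) e (LinearMap.comp Φ T)
    obtain ⟨m, rfl⟩ := (Module.bijective_dual_eval S M).2 G
    refine ⟨m, ?_⟩
    ext f
    obtain ⟨g, hg⟩ := exists_linearMap_trace e f
    have hf : f = T g := LinearMap.ext hg
    rw [hf]
    exact (hG g).symm

end Trace

theorem apply_eq_apply_one_mul (f : S →ₗ[R] FractionRing R) (t : S) : f t = f 1 * t :=
  (apply_eq_mul_of_isUnit exists_smul_eq_algebraMap (I := Subalgebra.toSubmodule S)
    (u := 1) (one_mem S) f t).trans (congrArg (· * (t : FractionRing R)) (one_mul _))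

/-- The dual of `S` is the conductor. -/
theorem exists_conductor_equiv_dual :
    Nonempty (conductorFrac R S ≃ₗ[R] (S →ₗ[R] R)) := by
  have key (f : S →ₗ[R] R) (t : S) : algebraMap R (FractionRing R) (f t) =
      algebraMap R (FractionRing R) (f 1) * t :=
    apply_eq_apply_one_mul (Algebra.linearMap R (FractionRing R) ∘ₗ f) t
  let Θ : (S →ₗ[R] R) →ₗ[R] conductorFrac R S := LinearMap.codRestrict _
    (Algebra.linearMap R (FractionRing R) ∘ₗ LinearMap.applyₗ (1 : S)) fun f => by
      rw [conductorFrac, Submodule.mem_div_iff_forall_mul_mem]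
      exact fun t ht => Submodule.mem_one.2 ⟨f ⟨t, ht⟩, key f ⟨t, ht⟩⟩
  have hΘ (f) : (Θ f : FractionRing R) = algebraMap R (FractionRing R) (f 1) := rfl
  refine ⟨(LinearEquiv.ofBijective Θ ⟨fun f g h => ?_, fun c => ?_⟩).symm⟩
  · ext t
    apply IsFractionRing.injective R (FractionRing R)
    rw [key f, key g, ← hΘ, ← hΘ, h]
  · obtain ⟨f, hf⟩ := exists_linearMap_of_mem_range (IsFractionRing.injective R (FractionRing R))
      (LinearMap.mulLeft R (c : FractionRing R) ∘ₗ S.val.toLinearMap) fun t => by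
        have := Submodule.mem_div_iff_forall_mul_mem.1 c.2 t t.2
        exact Submodule.mem_one.1 this
    refine ⟨f, Subtype.ext ?_⟩
    rw [hΘ, hf]
    simp

theorem exists_equiv_end : Nonempty (S ≃ₗ[R] (S →ₗ[R] S)) := by
  refine ⟨LinearEquiv.ofBijective (LinearMap.mul R S) ⟨fun s t h => ?_, fun f => ⟨f 1, ?_⟩⟩⟩
  · simpa using LinearMap.congr_fun h 1
  · ext t
    exact (apply_eq_apply_one_mul (S.val.toLinearMap ∘ₗ f) t).symm

end Birational

section Dimension

theorem exists_mem_nonZeroDivisors_of_grade_ne_zero {A : Type*} [CommRing A] {J : Ideal A}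
    (h : J.grade ≠ 0) : ∃ a ∈ J, a ∈ nonZeroDivisors A := by
  contrapose! h
  refine nonpos_iff_eq_zero.1 (sSup_le ?_)
  rintro n ⟨rs, rfl, hJ, hrs⟩
  match rs with
  | [] => simp
  | a :: rs =>
    refine absurd ?_ (h a (hJ a (by simp)))
    rw [RingTheory.Sequence.isWeaklyRegular_cons_iff] at hrs
    exact mem_nonZeroDivisors_iff_right.2 fun x hx => hrs.1 (by simpa [mul_comm] using hx)

theorem exists_mem_maximalIdeal_mem_nonZeroDivisors {A : Type*} [CommRing A] [IsLocalRing A]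
    (hCM : IsCohenMacaulayLocalRing A) (hdim : ringKrullDim A = 1) :
    ∃ a ∈ IsLocalRing.maximalIdeal A, a ∈ nonZeroDivisors A := by
  obtain ⟨_, _, h⟩ := hCM
  refine exists_mem_nonZeroDivisors_of_grade_ne_zero fun h0 => ?_
  rw [h0, hdim] at h
  exact zero_ne_one h

theorem isMaximal_of_mem_of_mem_nonZeroDivisors {A : Type*} [CommRing A]
    (hdim : ringKrullDim A ≤ 1) {a : A} (ha : a ∈ nonZeroDivisors A) (P : Ideal A)
    (hP : P.IsPrime) (haP : a ∈ P) : P.IsMaximal := by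
  have : Ring.KrullDimLE 1 A := ⟨hdim⟩
  refine (Ring.krullDimLE_one_iff.1 this P hP).resolve_left fun h => ?_
  exact Set.disjoint_left.1 (Ideal.disjoint_nonZeroDivisors_of_mem_minimalPrimes h) haP ha

section Integral

variable {A B : Type*} [CommRing A] [CommRing B] [Algebra A B] [Algebra.IsIntegral A B]

theorem algebraMap_mem_of_isMaximal [IsLocalRing A] {a : A}
    (ha : a ∈ IsLocalRing.maximalIdeal A) (P : Ideal B) (hP : P.IsMaximal) :
    algebraMap A B a ∈ P := by
  have := Ideal.isMaximal_comap_of_isIntegral_of_isMaximal (R := A) P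
  rw [← IsLocalRing.eq_maximalIdeal this] at ha
  exact ha

theorem isMaximal_of_algebraMap_mem {a : A}
    (h : ∀ P : Ideal A, P.IsPrime → a ∈ P → P.IsMaximal) (P : Ideal B) (hP : P.IsPrime)
    (haP : algebraMap A B a ∈ P) : P.IsMaximal :=
  Ideal.isMaximal_of_isIntegral_of_isMaximal_comap P
    (h (P.comap (algebraMap A B)) (Ideal.comap_isPrime _ _) haP)

end Integral

theorem finite_setOf_isMaximal {B : Type*} [CommRing B] [IsNoetherianRing B] {b : B}
    (hmax : ∀ P : Ideal B, P.IsMaximal → b ∈ P)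
    (hdim : ∀ P : Ideal B, P.IsPrime → b ∈ P → P.IsMaximal) :
    {P : Ideal B | P.IsMaximal}.Finite := by
  refine (Ideal.finite_minimalPrimes_of_isNoetherianRing B (Ideal.span {b})).subset
    fun P hP => ⟨⟨hP.isPrime, ?_⟩, fun P' hP' hle => ?_⟩
  · simpa [Ideal.span_le] using hmax P hP
  · exact ((hdim P' hP'.1 (hP'.2 (Ideal.mem_span_singleton_self b))).eq_of_le
      hP.ne_top hle).ge

end Dimension

theorem exists_mem_forall_notMem_of_isMaximal {B M : Type*} [CommRing B] [AddCommGroup M]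
    [Module B M] (hfin : {P : Ideal B | P.IsMaximal}.Finite) (C : Submodule B M)
    (φ : Ideal B → Submodule B M) (h1 : ∀ P : Ideal B, P.IsMaximal → P • C ≤ φ P)
    (h2 : ∀ P : Ideal B, P.IsMaximal → ¬ C ≤ φ P) :
    ∃ x ∈ C, ∀ P : Ideal B, P.IsMaximal → x ∉ φ P := by
  classical
  let ι := {P : Ideal B | P.IsMaximal}
  have : Fintype ι := hfin.fintype
  have hcop : Pairwise (Function.onFun IsCoprime fun i : ι => (i : Ideal B)) := fun i j hij =>
    Ideal.isCoprime_iff_sup_eq.2 (Ideal.IsMaximal.coprime_of_ne i.2 j.2 fun h =>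
      hij (Subtype.ext h))
  choose e he using fun i : ι => Ideal.exists_forall_sub_mem_ideal hcop (Pi.single i 1)
  choose y hyC hy using fun i : ι => Set.not_subset.1 (h2 i i.2)
  refine ⟨∑ i, e i • y i, C.sum_mem fun i _ => C.smul_mem _ (hyC i), fun P hP hx => ?_⟩
  refine hy ⟨P, hP⟩ ?_
  have hsplit : y ⟨P, hP⟩ = ∑ i, e i • y i -
      ∑ i, (e i - (Pi.single i 1 : ι → B) ⟨P, hP⟩) • y i := by
    rw [← Finset.sum_sub_distrib, Finset.sum_eq_single ⟨P, hP⟩]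
    · simp [sub_smul]
    · intro i _ hi
      simp [Pi.single_eq_of_ne hi.symm]
    · simp
  rw [hsplit]
  exact (φ P).sub_mem hx ((φ P).sum_mem fun i _ =>
    h1 P hP (Submodule.smul_mem_smul (he i ⟨P, hP⟩) (hyC i)))

section FractionalDual

variable {R : Type u} [CommRing R] {S : Subalgebra R (FractionRing R)}

/-- The dual `(T : D)` of a fractional `S`-submodule with respect to `T`. -/
def fracDual (T : Submodule R (FractionRing R)) (D : Submodule S (FractionRing R)) :
    Submodule S (FractionRing R) where
  carrier := {z | ∀ x ∈ D, z * x ∈ T}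
  add_mem' hz hw x hx := by
    rw [add_mul]
    exact T.add_mem (hz x hx) (hw x hx)
  zero_mem' x _ := by simp
  smul_mem' s z hz x hx := by
    rw [smul_mul_assoc, ← mul_smul_comm]
    exact hz _ (D.smul_mem s hx)

theorem mem_fracDual {T : Submodule R (FractionRing R)} {D : Submodule S (FractionRing R)}
    {z : FractionRing R} : z ∈ fracDual T D ↔ ∀ x ∈ D, z * x ∈ T := Iff.rfl

theorem fracDual_anti (T : Submodule R (FractionRing R)) {D E : Submodule S (FractionRing R)}
    (h : D ≤ E) : fracDual T E ≤ fracDual T D := fun _ hz x hx => hz x (h hx)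

theorem le_fracDual_fracDual (T : Submodule R (FractionRing R))
    (D : Submodule S (FractionRing R)) : D ≤ fracDual T (fracDual T D) :=
  fun x hx z hz => mul_comm z x ▸ hz x hx

/-- A finitely generated fractional submodule containing a unit. -/
def IsRegularLattice (D : Submodule S (FractionRing R)) : Prop :=
  D.FG ∧ ∃ u : (FractionRing R)ˣ, (u : FractionRing R) ∈ D

theorem exists_common_denominator [Module.Finite R S] {D : Submodule S (FractionRing R)}
    (hD : D.FG) : ∃ r : R, IsUnit (algebraMap R (FractionRing R) r) ∧
      ∀ x ∈ D, algebraMap R (FractionRing R) r * x ∈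
        Set.range (algebraMap R (FractionRing R)) := by
  have : Module.Finite S D := Module.Finite.iff_fg.2 hD
  have h : Module.Finite R D := Module.Finite.trans S D
  have h : Module.Finite R (D.restrictScalars R) := h
  obtain ⟨r, hr, h⟩ := FractionalIdeal.isFractional_of_fg (S := nonZeroDivisors R)
    (Module.Finite.iff_fg.1 h)
  refine ⟨r, IsLocalization.map_units (FractionRing R) ⟨r, hr⟩, fun x hx => ?_⟩
  rw [← Algebra.smul_def]
  exact h x hx

theorem IsRegularLattice.fracDual [Module.Finite R S] [IsNoetherianRing S]
    {T : Submodule R (FractionRing R)} (h1 : 1 ≤ T) (hT : T ≤ Subalgebra.toSubmodule S)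
    {D : Submodule S (FractionRing R)} (hD : IsRegularLattice D) :
    IsRegularLattice (fracDual T D) := by
  obtain ⟨hfg, u, hu⟩ := hD
  constructor
  · refine Submodule.fg_of_fg_map_injective (LinearMap.mulLeft S (u : FractionRing R))
      (fun x y h => u.isUnit.mul_left_cancel h)
      (Submodule.FG.of_le (T := 1) (Submodule.one_eq_span (R := S) (A := FractionRing R) ▸
        Submodule.fg_span_singleton 1) ?_)
    rintro _ ⟨z, hz, rfl⟩
    rw [LinearMap.mulLeft_apply, mul_comm]
    exact Submodule.mem_one.2 ⟨⟨_, hT (hz u hu)⟩, rfl⟩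
  · obtain ⟨r, hr, h⟩ := exists_common_denominator hfg
    exact ⟨hr.unit, fun x hx => h1 (Submodule.mem_one.2 (h x hx))⟩

theorem isTorsionFreeModule_submodule_s15 (D : Submodule S (FractionRing R)) :
    IsTorsionFreeModule S D := by
  intro s hs x hx
  obtain ⟨a, ha, c, hc⟩ := exists_smul_eq_algebraMap (x : FractionRing R)
  have h0 : s * algebraMap R S c = 0 := by
    ext
    have : (s : FractionRing R) * x = 0 := congrArg Subtype.val hx
    change (s : FractionRing R) * algebraMap R (FractionRing R) c = 0
    rw [← hc, mul_smul_comm, this, smul_zero]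
  have hc0 : algebraMap R S c = 0 := mul_left_mem_nonZeroDivisors_eq_zero_iff hs |>.1 h0
  have hc1 : algebraMap R (FractionRing R) c = 0 := congrArg Subtype.val hc0
  rw [hc1, Algebra.smul_def] at hc
  exact Subtype.ext (ha.mul_right_eq_zero.1 hc)

theorem fracDual_one_fracDual_one_le [Module.Finite R S] {D : Submodule S (FractionRing R)}
    (hD : IsRegularLattice D) (h : Module.IsReflexive R D) :
    fracDual 1 (fracDual 1 D) ≤ D := by
  obtain ⟨hfg, u, hu⟩ := hD
  obtain ⟨r, hr, hrD⟩ := exists_common_denominator hfg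
  intro y hy
  refine mem_of_isReflexive (I := D.restrictScalars R) (IsFractionRing.injective R _)
    exists_smul_eq_algebraMap hu hr hrD h fun z hz => ?_
  rw [mul_comm]
  exact Submodule.mem_one.1 (hy z fun x hx => Submodule.mem_one.2 (hz x hx))

theorem fracDual_toSubmodule_fracDual_toSubmodule_le [Module.Finite R S]
    {D : Submodule S (FractionRing R)} (hD : IsRegularLattice D) (h : Module.IsReflexive S D) :
    fracDual (Subalgebra.toSubmodule S) (fracDual (Subalgebra.toSubmodule S) D) ≤ D := by
  obtain ⟨hfg, u, hu⟩ := hD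
  obtain ⟨r, hr, hrD⟩ := exists_common_denominator hfg
  have hmem (x : FractionRing R) : x ∈ Set.range (algebraMap S (FractionRing R)) ↔ x ∈ S :=
    ⟨fun ⟨s, hs⟩ => hs ▸ s.2, fun hx => ⟨⟨x, hx⟩, rfl⟩⟩
  intro y hy
  refine mem_of_isReflexive (I := D) (r := algebraMap R S r) Subtype.val_injective
    exists_subalgebra_smul_eq_algebraMap hu hr (fun x hx => ?_) h fun z hz => ?_
  · obtain ⟨c, hc⟩ := hrD x hx
    exact ⟨algebraMap R S c, hc⟩
  · rw [mul_comm, hmem]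
    exact hy z fun x hx => (hmem _).1 (hz x hx)

end FractionalDual

section Conductor

variable {R : Type u} [CommRing R] {S : Subalgebra R (FractionRing R)}

theorem one_le_toSubmodule : (1 : Submodule R (FractionRing R)) ≤ Subalgebra.toSubmodule S :=
  fun _ hx => by
    obtain ⟨r, rfl⟩ := Submodule.mem_one.1 hx
    exact S.algebraMap_mem r

theorem mem_one_submodule {x : FractionRing R} :
    x ∈ (1 : Submodule S (FractionRing R)) ↔ x ∈ S :=
  ⟨fun h => by obtain ⟨s, rfl⟩ := Submodule.mem_one.1 h; exact s.2,
    fun h => Submodule.mem_one.2 ⟨⟨x, h⟩, rfl⟩⟩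

theorem isRegularLattice_one : IsRegularLattice (1 : Submodule S (FractionRing R)) :=
  ⟨Submodule.one_eq_span (R := S) (A := FractionRing R) ▸ Submodule.fg_span_singleton 1,
    1, mem_one_submodule.2 (one_mem S)⟩

theorem smul_fracDual_one_le (P : Ideal S) :
    P • fracDual 1 (1 : Submodule S (FractionRing R)) ≤
      fracDual 1 (fracDual (Subalgebra.toSubmodule S)
        (IsLocalization.coeSubmodule (FractionRing R) P)) := by
  refine Submodule.smul_le.2 fun p hp c hc z hz => ?_
  rw [Algebra.smul_def, mul_right_comm, mul_comm]
  refine hc _ (mem_one_submodule.2 ?_)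
  rw [mul_comm]
  exact hz _ ((IsLocalization.mem_coeSubmodule _ P).2 ⟨p, hp, rfl⟩)

/-- If duals over `R` and over `S` are well-behaved, the conductor is a principal fractional
ideal of the semilocal ring `S`. -/
theorem exists_fracDual_one_eq_span_singleton [Module.Finite R S] [IsNoetherianRing S] {b : S}
    (hb : IsUnit (b : FractionRing R)) (hmax : ∀ P : Ideal S, P.IsMaximal → b ∈ P)
    (hfin : {P : Ideal S | P.IsMaximal}.Finite)
    (hR : ∀ D : Submodule S (FractionRing R), IsRegularLattice D →
      fracDual 1 (fracDual 1 D) ≤ D)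
    (hS : ∀ D : Submodule S (FractionRing R), IsRegularLattice D →
      fracDual (Subalgebra.toSubmodule S) (fracDual (Subalgebra.toSubmodule S) D) ≤ D) :
    ∃ x : FractionRing R, fracDual 1 (1 : Submodule S (FractionRing R)) = Submodule.span S {x} := by
  set C := fracDual 1 (1 : Submodule S (FractionRing R)) with hC
  have hClat : IsRegularLattice C := isRegularLattice_one.fracDual le_rfl one_le_toSubmodule
  have hlat (P : Ideal S) (hP : P.IsMaximal) :
      IsRegularLattice (IsLocalization.coeSubmodule (FractionRing R) P) :=
    ⟨(IsNoetherian.noetherian P).map _, hb.unit, b, hmax P hP, rfl⟩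
  have hone (P : Ideal S) (hP : P.IsMaximal) :
      (1 : FractionRing R) ∉ IsLocalization.coeSubmodule (FractionRing R) P := by
    rintro ⟨p, hp, h⟩
    have : p = 1 := Subtype.ext h
    exact hP.ne_top ((Ideal.eq_top_iff_one P).2 (this ▸ hp))
  obtain ⟨x, hxC, hx⟩ := exists_mem_forall_notMem_of_isMaximal hfin C
    (fun P => fracDual 1 (fracDual (Subalgebra.toSubmodule S)
      (IsLocalization.coeSubmodule (FractionRing R) P)))
    (fun P _ => smul_fracDual_one_le P) fun P hP hle => hone P hP <| hS _ (hlat P hP) <| by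
      intro z hz
      rw [one_mul]
      refine mem_one_submodule.1 (hR _ isRegularLattice_one fun c hc => ?_)
      rw [mul_comm]
      exact hle hc z hz
  set N := Submodule.span S {x} ⊔ Ideal.span {b} • C with hN
  have hNC : N ≤ C := sup_le ((Submodule.span_singleton_le_iff_mem _ _).2 hxC)
    Submodule.smul_le_right
  have hNlat : IsRegularLattice N := by
    obtain ⟨hfg, u, hu⟩ := hClat
    refine ⟨hfg.of_le hNC, hb.unit * u, Submodule.mem_sup_right ?_⟩
    exact Submodule.smul_mem_smul (Ideal.mem_span_singleton_self b) hu
  set J := fracDual 1 N with hJ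
  have hJlat : IsRegularLattice J := hNlat.fracDual le_rfl one_le_toSubmodule
  set I := fracDual (Subalgebra.toSubmodule S) J with hI
  have hIone : I ≤ 1 := fun z hz => by
    refine mem_one_submodule.2 ?_
    rw [← mul_one z]
    exact hz 1 fun n hn => by
      rw [mul_comm]; exact hNC hn 1 (mem_one_submodule.2 (one_mem S))
  have hCN : C ≤ N := by
    by_cases h : (1 : FractionRing R) ∈ I
    · refine le_trans (fracDual_anti 1 fun z hz => ?_) (hR N hNlat)
      exact mem_one_submodule.2 (one_mul z ▸ h z hz)
    · exfalso
      let I' : Ideal S := I.comap (Algebra.linearMap S (FractionRing R))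
      have hI' : I' ≠ ⊤ := fun h' => h (by simpa [I'] using (Ideal.eq_top_iff_one I').1 h')
      obtain ⟨P, hP, hle⟩ := Ideal.exists_le_maximal I' hI'
      have hIP : I ≤ IsLocalization.coeSubmodule (FractionRing R) P := fun z hz =>
        ⟨⟨z, mem_one_submodule.1 (hIone hz)⟩, hle (show _ ∈ I from hz), rfl⟩
      exact hx P hP (fracDual_anti 1 ((fracDual_anti _ hIP).trans (hS J hJlat))
        (le_fracDual_fracDual 1 N (Submodule.mem_sup_left (Submodule.mem_span_singleton_self x))))
  refine ⟨x, le_antisymm ?_ ((Submodule.span_singleton_le_iff_mem _ _).2 hxC)⟩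
  refine Submodule.le_of_le_smul_of_le_jacobson_bot hClat.1 ?_ hCN
  rw [Ideal.span_singleton_le_iff_mem, Ideal.jacobson, Ideal.mem_sInf]
  exact fun {P} hP => hmax P hP.2

end Conductor

section Duality

variable {R : Type u} [CommRing R] {S : Subalgebra R (FractionRing R)}

theorem mem_conductorFrac {z : FractionRing R} :
    z ∈ conductorFrac R S ↔ z ∈ fracDual 1 (1 : Submodule S (FractionRing R)) := by
  rw [conductorFrac, Submodule.mem_div_iff_forall_mul_mem, mem_fracDual]
  simp only [mem_one_submodule, Subalgebra.mem_toSubmodule]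

theorem mul_mem_conductorFrac {s z : FractionRing R} (hs : s ∈ S) (hz : z ∈ conductorFrac R S) :
    s * z ∈ conductorFrac R S :=
  mem_conductorFrac.2 (Submodule.smul_mem _ (⟨s, hs⟩ : S) (mem_conductorFrac.1 hz))

theorem exists_isUnit_algebraMap_mem_conductorFrac [Module.Finite R S] :
    ∃ r : R, IsUnit (algebraMap R (FractionRing R) r) ∧
      algebraMap R (FractionRing R) r ∈ conductorFrac R S := by
  obtain ⟨r, hr, h⟩ := exists_common_denominator (isRegularLattice_one (S := S)).1
  exact ⟨r, hr, mem_conductorFrac.2 fun x hx => Submodule.mem_one.2 (h x hx)⟩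

/-- If the conductor is principal over `S`, then `S` is self-dual. -/
theorem nonempty_selfDual_of_fracDual_eq_span_singleton [Module.Finite R S] {x : FractionRing R}
    (hx : fracDual 1 (1 : Submodule S (FractionRing R)) = Submodule.span S {x}) :
    Nonempty (S ≃ₗ[R] (S →ₗ[R] R)) := by
  have hmem {z : FractionRing R} : z ∈ conductorFrac R S ↔ ∃ s : S, s * x = z := by
    rw [mem_conductorFrac, hx]
    exact Submodule.mem_span_singleton
  obtain ⟨r, hr, hrC⟩ := exists_isUnit_algebraMap_mem_conductorFrac (S := S)
  have hxu : IsUnit x := by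
    obtain ⟨s, hs⟩ := hmem.1 hrC
    exact isUnit_of_mul_isUnit_right (hs ▸ hr)
  let μ : S →ₗ[R] conductorFrac R S := LinearMap.codRestrict _
    (LinearMap.mulRight R x ∘ₗ S.val.toLinearMap) fun s => hmem.2 ⟨s, rfl⟩
  have hμ : Function.Bijective μ := by
    refine ⟨fun s t h => Subtype.ext (hxu.mul_right_cancel (congrArg Subtype.val h)),
      fun z => ?_⟩
    obtain ⟨s, hs⟩ := hmem.1 z.2
    exact ⟨s, Subtype.ext hs⟩
  obtain ⟨e⟩ := exists_conductor_equiv_dual (S := S)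
  exact ⟨(LinearEquiv.ofBijective μ hμ).trans e⟩

/-- If `S` is reflexive, it is the endomorphism ring of its conductor. -/
theorem exists_equiv_end_conductor [Module.Finite R S] (hS : Module.IsReflexive R S) :
    Nonempty (S ≃ₗ[R] (conductorFrac R S →ₗ[R] conductorFrac R S)) := by
  obtain ⟨r, hr, hrC⟩ := exists_isUnit_algebraMap_mem_conductorFrac (S := S)
  let μ : S →ₗ[R] Module.End R (conductorFrac R S) :=
    { toFun s := (LinearMap.mulLeft R (s : FractionRing R)).restrict
        fun z hz => mul_mem_conductorFrac s.2 hz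
      map_add' s t := by ext; exact add_mul _ _ _
      map_smul' a s := by ext; exact smul_mul_assoc a _ _ }
  have hμ (s : S) (z : conductorFrac R S) : (μ s z : FractionRing R) = s * z := rfl
  refine ⟨LinearEquiv.ofBijective μ ⟨fun s t h => ?_, fun f => ?_⟩⟩
  · have := congrArg Subtype.val (LinearMap.congr_fun h ⟨_, hrC⟩)
    exact Subtype.ext (hr.mul_right_cancel this)
  · have hf := apply_eq_mul_of_isUnit exists_smul_eq_algebraMap (u := hr.unit) hrC
      ((conductorFrac R S).subtype ∘ₗ f)
    set z := (↑(hr.unit)⁻¹ : FractionRing R) *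
      ((conductorFrac R S).subtype ∘ₗ f) ⟨hr.unit, hrC⟩
    have hz : z ∈ Subalgebra.toSubmodule S := by
      refine mem_of_isReflexive (IsFractionRing.injective R _) exists_smul_eq_algebraMap
        (u := 1) (one_mem S) hr (fun x hx => Submodule.mem_one.1
          (mem_conductorFrac.1 hrC x (mem_one_submodule.2 hx))) hS fun c hc => ?_
      have hcC : c ∈ conductorFrac R S := mem_conductorFrac.2 fun x hx =>
        Submodule.mem_one.2 (hc x (mem_one_submodule.1 hx))
      have := mem_conductorFrac.1 (f ⟨c, hcC⟩).2 1 (mem_one_submodule.2 (one_mem S))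
      rw [mul_one] at this
      rw [mul_comm]
      exact Submodule.mem_one.1 (hf ⟨c, hcC⟩ ▸ this)
    refine ⟨⟨z, hz⟩, ?_⟩
    ext x
    exact (hf x).symm

theorem nonempty_selfDual_iff_conductor_stable [Module.Finite R S]
    (hrefl : Nonempty (S ≃ₗ[R] (S →ₗ[R] R)) → Module.IsReflexive R S) :
    Nonempty (S ≃ₗ[R] (S →ₗ[R] R)) ↔ Module.IsReflexive R S ∧
      Nonempty (conductorFrac R S ≃ₗ[R] (conductorFrac R S →ₗ[R] conductorFrac R S)) := by
  obtain ⟨d⟩ := exists_conductor_equiv_dual (S := S)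
  refine ⟨fun ⟨e⟩ => ⟨hrefl ⟨e⟩, ?_⟩, fun ⟨hS, ⟨e⟩⟩ => ?_⟩
  · obtain ⟨g⟩ := exists_equiv_end (S := S)
    have c : conductorFrac R S ≃ₗ[R] S := d.trans e.symm
    exact ⟨(c.trans g).trans c.conj.symm⟩
  · obtain ⟨g⟩ := exists_equiv_end_conductor hS
    exact ⟨(g.trans e.symm).trans d⟩

end Duality

section Main

variable {R : Type u} [CommRing R] {S : Subalgebra R (FractionRing R)}

theorem exists_mem_nonZeroDivisors_subalgebra (hCM : IsCohenMacaulayLocalRing R)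
    (hdim : ringKrullDim R = 1) [Module.Finite R S] :
    ∃ b : S, IsUnit (b : FractionRing R) ∧ b ∈ nonZeroDivisors S ∧
      (∀ P : Ideal S, P.IsMaximal → b ∈ P) ∧
      ∀ P : Ideal S, P.IsPrime → b ∈ P → P.IsMaximal := by
  obtain ⟨_, _⟩ := hCM.2
  obtain ⟨a, ha, ha0⟩ := exists_mem_maximalIdeal_mem_nonZeroDivisors hCM hdim
  have hu : IsUnit (algebraMap R (FractionRing R) a) :=
    IsLocalization.map_units (FractionRing R) ⟨a, ha0⟩
  refine ⟨algebraMap R S a, hu, ?_, fun P hP => algebraMap_mem_of_isMaximal ha P hP,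
    isMaximal_of_algebraMap_mem (isMaximal_of_mem_of_mem_nonZeroDivisors hdim.le ha0)⟩
  refine mem_nonZeroDivisors_iff_right.2 fun x hx => Subtype.ext (hu.mul_left_eq_zero.1 ?_)
  exact congrArg Subtype.val hx

theorem CM_subset_refl_iff_selfdual [Module.Finite R S] (hG : IsGorensteinRing S) {b : S}
    (hb : IsUnit (b : FractionRing R)) (hb0 : b ∈ nonZeroDivisors S)
    (hmax : ∀ P : Ideal S, P.IsMaximal → b ∈ P)
    (hdim : ∀ P : Ideal S, P.IsPrime → b ∈ P → P.IsMaximal) :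
    (∀ (M : Type u) [AddCommGroup M] [Module R M] [Module S M] [IsScalarTower R S M],
      Module.Finite S M → IsTorsionFreeModule S M → Module.IsReflexive R M) ↔
      Nonempty (S ≃ₗ[R] (S →ₗ[R] R)) := by
  have := hG.1
  have hinj {M : Type u} [AddCommGroup M] [Module S M] (hM : IsTorsionFreeModule S M) :
      Function.Injective fun m : M => b • m := fun m n h =>
    sub_eq_zero.1 (hM b hb0 _ (by rw [smul_sub]; exact sub_eq_zero.2 h))
  refine ⟨fun h => ?_, fun ⟨e⟩ M _ _ _ _ hfin hM => isReflexive_of_selfDual e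
    (isReflexive_of_isGorensteinRing hG hb0 hmax hdim M (hinj hM))⟩
  obtain ⟨x, hx⟩ := exists_fracDual_one_eq_span_singleton hb hmax
    (finite_setOf_isMaximal hmax hdim)
    (fun D hD => fracDual_one_fracDual_one_le hD
      (h D (Module.Finite.iff_fg.2 hD.1) (isTorsionFreeModule_submodule_s15 D)))
    (fun D hD => by
      have : Module.Finite S D := Module.Finite.iff_fg.2 hD.1
      exact fracDual_toSubmodule_fracDual_toSubmodule_le hD
        (isReflexive_of_isGorensteinRing hG hb0 hmax hdim D
          (hinj (isTorsionFreeModule_submodule_s15 D))))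
  exact nonempty_selfDual_of_fracDual_eq_span_singleton hx

end Main

/-- for a Gorenstein module finite birational extension `S` of `R`,
the following are equivalent: (i) `CM(S) ⊆ refl(R)`; (ii) `S ≅ Hom_R(S, R)`;
(iii) `S` is a reflexive `R`-module and the conductor is a stable ideal. -/
theorem CM_subset_refl_iff_selfdual_iff_conductor_stable (R : Type u) [CommRing R]
    (hCM : IsCohenMacaulayLocalRing R) (hdim : ringKrullDim R = 1)
    (hGG : IsGenericallyGorenstein R)
    (S : Subalgebra R (FractionRing R)) (hfin : Module.Finite R S)
    (hGor : IsGorensteinRing S) :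
    ((∀ (M : Type u) [AddCommGroup M] [Module R M] [Module S M] [IsScalarTower R S M],
        Module.Finite S M → IsTorsionFreeModule S M → Module.IsReflexive R M) ↔
      Nonempty (S ≃ₗ[R] (S →ₗ[R] R))) ∧
    (Nonempty (S ≃ₗ[R] (S →ₗ[R] R)) ↔
      (Module.IsReflexive R S ∧
        Nonempty ((↥(conductorFrac R S)) ≃ₗ[R]
          ((↥(conductorFrac R S)) →ₗ[R] (↥(conductorFrac R S)))))) := by
  obtain ⟨b, hb, hb0, hmax, hprime⟩ := exists_mem_nonZeroDivisors_subalgebra (S := S) hCM hdim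
  have h := CM_subset_refl_iff_selfdual hGor hb hb0 hmax hprime
  refine ⟨h, nonempty_selfDual_iff_conductor_stable fun e => h.2 e S inferInstance ?_⟩
  exact fun a ha s hs => (mul_left_mem_nonZeroDivisors_eq_zero_iff ha).1 hs
end
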